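/- arXiv:1510.08740 — 2 statements merged into one kernel-verified Lean document; each statement's English description precedes it below -/
import Mathlib

section
/- Let H be a real Hilbert space, Ψ : H → ℝ ∪ {+∞} proper, lower-semicontinuous and convex, and Φ : H → ℝ convex and continuously differentiable with L-Lipschitz continuous gradient. Suppose x* ∈ argmin(Ψ + Φ), and let (x_k) be generated by the accelerated forward-backward algorithm with parameter α > 3 and step size 0 < s < 1/L. Then for every x* ∈ argmin(Ψ + Φ), the limit lim_{k→∞} ‖x_k − x*‖ exists. -/
open Filter RealInnerProductSpace

/-!
The iteration is viewed through Nesterov's parameters `t k = (k + α - 2) / (α - 1)`, for which the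
extrapolation coefficient is `(t k - 1) / t (k + 1)`. Write `T k` for the scaled gap
`2s (Θ (x k) - min Θ)`, where `Θ = Ψ + Φ`. One forward-backward step bounds both `T (k + 1) - T k`
and `T (k + 1)`; the combination with weights `t (t - 1)` and `t` (at `t = t (k + 1)`) shows that
`t k ^ 2 * T k + ‖(t k - 1) • (x k - x (k - 1)) + (x k - z)‖ ^ 2` decreases by a fixed multiple of
`t k * T k`, because `α > 3`. Hence `∑ t k * T k < ∞`, then `∑ t k * ‖x k - x (k - 1)‖ ^ 2 < ∞`, and
then the positive parts of the increments of `‖x k - z‖ ^ 2` are summable, which forces convergence.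
-/

open scoped NNReal Topology

section Sequences

variable {a b c : ℕ → ℝ} {m : ℝ}

theorem exists_tendsto_of_succ_le_add (ha : ∀ n, m ≤ a n) (hc : Summable c)
    (h : ∀ n, a (n + 1) ≤ a n + c n) : ∃ l, Tendsto a atTop (𝓝 l) := by
  obtain ⟨C, hC⟩ := hc.hasSum.tendsto_sum_nat.bddAbove_range
  have anti : Antitone fun n => a n - ∑ i ∈ Finset.range n, c i := by
    refine antitone_nat_of_succ_le fun n => ?_
    rw [Finset.sum_range_succ]
    linarith [h n]
  have bdd : BddBelow (Set.range fun n => a n - ∑ i ∈ Finset.range n, c i) := by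
    refine ⟨m - C, ?_⟩
    rintro _ ⟨n, rfl⟩
    exact sub_le_sub (ha n) (hC ⟨n, rfl⟩)
  exact ⟨_, ((tendsto_atTop_ciInf anti bdd).add hc.hasSum.tendsto_sum_nat).congr
    fun n => sub_add_cancel _ _⟩

theorem summable_of_succ_add_le_add (ha : ∀ n, m ≤ a n) (hb : ∀ n, 0 ≤ b n) (hc : Summable c)
    (h : ∀ n, a (n + 1) + b n ≤ a n + c n) : Summable b := by
  obtain ⟨C, hC⟩ := hc.hasSum.tendsto_sum_nat.bddAbove_range
  have partial_sum_le (n : ℕ) :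
      a n + ∑ i ∈ Finset.range n, b i ≤ a 0 + ∑ i ∈ Finset.range n, c i := by
    induction n with
    | zero => simp
    | succ n ih =>
      rw [Finset.sum_range_succ, Finset.sum_range_succ]
      linarith [h n]
  refine summable_of_sum_range_le (c := a 0 + C - m) hb fun n => ?_
  linarith [partial_sum_le n, ha n, hC ⟨n, rfl⟩]

end Sequences

section ExtendedReal

variable {a b : EReal} {p q r w : ℝ}

theorem add_coe_ne_top_of_le (h : a + (p : EReal) ≤ b + (q : EReal)) (hb : b ≠ ⊤) : a ≠ ⊤ := by
  rintro rfl
  rw [EReal.top_add_coe, top_le_iff] at h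
  exact EReal.add_ne_top hb (EReal.coe_ne_top q) h

theorem toReal_add_le_toReal_add (h : a + (p : EReal) ≤ b + (q : EReal)) (ha : a ≠ ⊥)
    (hb : b ≠ ⊤) (hb' : b ≠ ⊥) : a.toReal + p ≤ b.toReal + q := by
  lift a to ℝ using ⟨add_coe_ne_top_of_le h hb, ha⟩
  lift b to ℝ using ⟨hb, hb'⟩
  exact_mod_cast h

theorem add_coe_le_add_coe_of_add_le_add (h : a + (p : EReal) ≤ b + (q : EReal))
    (hpq : r + q ≤ w + p) : a + (r : EReal) ≤ b + (w : EReal) :=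
  calc a + (r : EReal) = a + (p : EReal) + ((r - p : ℝ) : EReal) := by
        rw [add_assoc, ← EReal.coe_add, add_sub_cancel]
    _ ≤ b + (q : EReal) + ((r - p : ℝ) : EReal) := by gcongr
    _ = b + ((q + (r - p) : ℝ) : EReal) := by rw [add_assoc, ← EReal.coe_add]
    _ ≤ b + (w : EReal) := by
        gcongr
        linarith

end ExtendedReal

section SmoothConvex

variable {E : Type*} [NormedAddCommGroup E] [NormedSpace ℝ E] {f : E → ℝ}

theorem hasDerivAt_comp_lineMap {u v : E} {φ : E →L[ℝ] ℝ} {τ : ℝ}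
    (hf : HasFDerivAt f φ (AffineMap.lineMap u v τ)) :
    HasDerivAt (fun τ : ℝ => f (AffineMap.lineMap u v τ)) (φ (v - u)) τ :=
  hf.comp_hasDerivAt τ AffineMap.hasDerivAt_lineMap

theorem le_add_sq_of_lipschitzWith_fderiv {f' : E → E →L[ℝ] ℝ} {L : ℝ≥0}
    (hf : ∀ u, HasFDerivAt f (f' u) u) (hL : LipschitzWith L f') (u v : E) :
    f v ≤ f u + f' u (v - u) + L / 2 * ‖v - u‖ ^ 2 := by
  have deriv_line (τ : ℝ) := hasDerivAt_comp_lineMap (hf (AffineMap.lineMap u v τ))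
  have deriv_bound (τ : ℝ) : HasDerivAt
      (fun τ : ℝ => f u + τ * f' u (v - u) + τ ^ 2 * (L / 2 * ‖v - u‖ ^ 2))
      (f' u (v - u) + L * τ * ‖v - u‖ ^ 2) τ := by
    refine ((((hasDerivAt_id τ).mul_const (f' u (v - u))).const_add (f u)).add
      ((hasDerivAt_pow 2 τ).mul_const (L / 2 * ‖v - u‖ ^ 2))).congr_deriv ?_
    norm_num
    ring
  have deriv_le (τ : ℝ) (hτ : τ ∈ Set.Ico (0 : ℝ) 1) :
      f' (AffineMap.lineMap u v τ) (v - u) ≤ f' u (v - u) + L * τ * ‖v - u‖ ^ 2 := by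
    have hdist : ‖f' (AffineMap.lineMap u v τ) - f' u‖ ≤ L * (τ * ‖v - u‖) := by
      refine (hL.norm_sub_le _ _).trans_eq ?_
      rw [← dist_eq_norm, dist_lineMap_left, Real.norm_of_nonneg hτ.1, dist_comm, dist_eq_norm]
    have hop := (le_abs_self _).trans ((f' (AffineMap.lineMap u v τ) - f' u).le_of_opNorm_le
      hdist (v - u))
    rw [sub_apply] at hop
    linarith
  have := image_le_of_deriv_right_le_deriv_boundary
    (fun τ _ => (deriv_line τ).continuousAt.continuousWithinAt)
    (fun τ _ => (deriv_line τ).hasDerivWithinAt) (by simp)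
    (fun τ _ => (deriv_bound τ).continuousAt.continuousWithinAt)
    (fun τ _ => (deriv_bound τ).hasDerivWithinAt) deriv_le (Set.right_mem_Icc.2 zero_le_one)
  simpa using this

theorem add_fderiv_le_of_convexOn {S : Set E} {φ : E →L[ℝ] ℝ} {u v : E} (hf : ConvexOn ℝ S f)
    (hφ : HasFDerivAt f φ u) (hu : u ∈ S) (hv : v ∈ S) : f u + φ (v - u) ≤ f v := by
  have hderiv : HasDerivAt (f ∘ AffineMap.lineMap u v) (φ (v - u)) (0 : ℝ) :=
    hasDerivAt_comp_lineMap (by rwa [AffineMap.lineMap_apply_zero])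
  have hslope := (hf.comp_affineMap (AffineMap.lineMap u v)).le_slope_of_hasDerivAt
    (by simpa using hu) (by simpa using hv) zero_lt_one hderiv
  simp only [slope_def_field, Function.comp_apply, AffineMap.lineMap_apply_one,
    AffineMap.lineMap_apply_zero, sub_zero, div_one] at hslope
  linarith

end SmoothConvex

section InnerProduct

variable {H : Type*} [NormedAddCommGroup H] [InnerProductSpace ℝ H]

theorem norm_sq_combo_sub (a b z : H) (τ : ℝ) :
    ‖(1 - τ) • a + τ • b - z‖ ^ 2
      = (1 - τ) * ‖a - z‖ ^ 2 + τ * ‖b - z‖ ^ 2 - τ * (1 - τ) * ‖b - a‖ ^ 2 := by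
  have hcombo : (1 - τ) • a + τ • b - z = (a - z) + τ • (b - a) := by module
  have hb : b - z = (a - z) + (b - a) := by abel
  rw [hcombo, hb, norm_add_sq_real, norm_add_sq_real, norm_smul, inner_smul_right, mul_pow,
    Real.norm_eq_abs, sq_abs]
  ring

section ForwardBackward

/-- Convexity of an extended-real-valued function; Mathlib's `ConvexOn` does not apply because
`EReal` is not a module over `ℝ`. -/
def IsConvexEReal (Ψ : H → EReal) : Prop :=
  ∀ u v : H, ∀ a b : ℝ, 0 ≤ a → 0 ≤ b → a + b = 1 →
    Ψ (a • u + b • v) ≤ (a : EReal) * Ψ u + (b : EReal) * Ψ v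

/-- `p` is a proximal point `prox_{sΨ}(w)`, that is, a minimizer of `Ψ + ‖· - w‖² / (2s)`. Existence
and uniqueness of such a point are not part of the definition. -/
def IsProxPoint (Ψ : H → EReal) (s : ℝ) (w p : H) : Prop :=
  ∀ u : H, Ψ p + ((1 / (2 * s) * ‖p - w‖ ^ 2 : ℝ) : EReal)
    ≤ Ψ u + ((1 / (2 * s) * ‖u - w‖ ^ 2 : ℝ) : EReal)

variable {Ψ : H → EReal} {Φ : H → ℝ} {Φ' : H → H} {L : ℝ≥0} {s : ℝ}

theorem IsProxPoint.add_norm_sq_le {w p : H} (hp : IsProxPoint Ψ s w p) (hΨ : IsConvexEReal Ψ)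
    (u : H) :
    Ψ p + ((1 / (2 * s) * ‖p - w‖ ^ 2 + 1 / (2 * s) * ‖u - p‖ ^ 2 : ℝ) : EReal)
      ≤ Ψ u + ((1 / (2 * s) * ‖u - w‖ ^ 2 : ℝ) : EReal) := by
  rcases eq_or_ne (Ψ u) ⊤ with hu | hu
  · rw [hu, EReal.top_add_coe]
    exact le_top
  rcases eq_or_ne (Ψ p) ⊥ with hpb | hpb
  · rw [hpb, EReal.bot_add]
    exact bot_le
  have hub : Ψ u ≠ ⊥ := by
    intro hub
    have := hp u
    rw [hub, EReal.bot_add, le_bot_iff, EReal.add_eq_bot_iff] at this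
    exact this.elim hpb (EReal.coe_ne_bot _)
  obtain ⟨a, ha⟩ : ∃ a : ℝ, (a : EReal) = Ψ p :=
    ⟨_, EReal.coe_toReal (add_coe_ne_top_of_le (hp u) hu) hpb⟩
  obtain ⟨b, hb⟩ : ∃ b : ℝ, (b : EReal) = Ψ u := ⟨_, EReal.coe_toReal hu hub⟩
  set κ := 1 / (2 * s) with hκ
  -- Compare `p` with the points of the segment from `p` to `u`, and let them tend to `p`.
  have segment_le (τ : ℝ) (hτ : τ ∈ Set.Ioo (0 : ℝ) 1) :
      a + (κ * ‖p - w‖ ^ 2 + (1 - τ) * (κ * ‖u - p‖ ^ 2)) ≤ b + κ * ‖u - w‖ ^ 2 := by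
    have hconv := hΨ p u (1 - τ) τ (by linarith [hτ.2]) hτ.1.le (by ring)
    have hmin := (hp ((1 - τ) • p + τ • u)).trans (add_le_add_left hconv _)
    rw [← ha, ← hb, norm_sq_combo_sub, ← hκ] at hmin
    have hreal : a + κ * ‖p - w‖ ^ 2 ≤ (1 - τ) * a + τ * b + κ * ((1 - τ) * ‖p - w‖ ^ 2
        + τ * ‖u - w‖ ^ 2 - τ * (1 - τ) * ‖u - p‖ ^ 2) := by exact_mod_cast hmin
    refine le_of_mul_le_mul_left ?_ hτ.1
    linarith
  have hlim : Tendsto (fun τ : ℝ => a + (κ * ‖p - w‖ ^ 2 + (1 - τ) * (κ * ‖u - p‖ ^ 2)))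
      (𝓝[>] 0) (𝓝 (a + (κ * ‖p - w‖ ^ 2 + (1 - 0) * (κ * ‖u - p‖ ^ 2)))) :=
    tendsto_nhdsWithin_of_tendsto_nhds (Continuous.tendsto (by fun_prop) 0)
  have hlimit_le := le_of_tendsto hlim
    (eventually_of_mem (Ioo_mem_nhdsGT zero_lt_one) segment_le)
  rw [sub_zero, one_mul] at hlimit_le
  rw [← ha, ← hb]
  exact_mod_cast hlimit_le

theorem IsProxPoint.forwardBackward_le {p y : H} (hp : IsProxPoint Ψ s (y - s • Φ' y) p)
    (hs : 0 < s) (hsL : s * L ≤ 1) (hΨ : IsConvexEReal Ψ) (hΦ : ConvexOn ℝ Set.univ Φ)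
    (hΦ' : ∀ u, HasFDerivAt Φ (innerSL ℝ (Φ' u)) u) (hL : LipschitzWith L Φ') (u : H) :
    Ψ p + ((Φ p + 1 / (2 * s) * ‖p - u‖ ^ 2 : ℝ) : EReal)
      ≤ Ψ u + ((Φ u + 1 / (2 * s) * ‖y - u‖ ^ 2 : ℝ) : EReal) := by
  refine add_coe_le_add_coe_of_add_le_add (hp.add_norm_sq_le hΨ u) ?_
  have hL' : LipschitzWith L fun u => innerSL ℝ (Φ' u) :=
    LipschitzWith.of_dist_le_mul fun u v => by
      rw [dist_eq_norm, ← map_sub, innerSL_apply_norm, ← dist_eq_norm]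
      exact hL.dist_le_mul u v
  have upper := le_add_sq_of_lipschitzWith_fderiv hΦ' hL' y p
  have lower := add_fderiv_le_of_convexOn hΦ (hΦ' y) (Set.mem_univ y) (Set.mem_univ u)
  simp only [innerSL_apply_apply] at upper lower
  have expand (q : H) : 1 / (2 * s) * ‖q - (y - s • Φ' y)‖ ^ 2
      = 1 / (2 * s) * ‖q - y‖ ^ 2 + ⟪Φ' y, q - y⟫ + s / 2 * ‖Φ' y‖ ^ 2 := by
    rw [sub_sub_eq_add_sub, add_sub_right_comm, norm_add_sq_real, inner_smul_right, norm_smul,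
      mul_pow, Real.norm_eq_abs, sq_abs, real_inner_comm]
    field_simp
  have hstep : L / 2 * ‖p - y‖ ^ 2 ≤ 1 / (2 * s) * ‖p - y‖ ^ 2 := by
    refine mul_le_mul_of_nonneg_right ?_ (sq_nonneg _)
    rw [div_le_div_iff₀ two_pos (by positivity)]
    linarith
  rw [expand, expand, norm_sub_rev p u, norm_sub_rev y u]
  linarith

/-- The objective `Ψ + Φ` as a real number; it is meaningful only where `Ψ` is finite. -/
noncomputable def realObjective (Ψ : H → EReal) (Φ : H → ℝ) (u : H) : ℝ :=
  (Ψ u).toReal + Φ u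

theorem IsProxPoint.realObjective_gap_add_norm_sq_le {p y u : H}
    (hp : IsProxPoint Ψ s (y - s • Φ' y) p) (hs : 0 < s) (hsL : s * L ≤ 1)
    (hΨ_bot : ∀ u, Ψ u ≠ ⊥) (hΨ : IsConvexEReal Ψ) (hΦ : ConvexOn ℝ Set.univ Φ)
    (hΦ' : ∀ u, HasFDerivAt Φ (innerSL ℝ (Φ' u)) u) (hL : LipschitzWith L Φ') (hu : Ψ u ≠ ⊤) :
    2 * s * (realObjective Ψ Φ p - realObjective Ψ Φ u) + ‖p - u‖ ^ 2 ≤ ‖y - u‖ ^ 2 := by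
  have hreal := toReal_add_le_toReal_add (hp.forwardBackward_le hs hsL hΨ hΦ hΦ' hL u)
    (hΨ_bot p) hu (hΨ_bot u)
  rw [realObjective, realObjective]
  field_simp at hreal
  linarith

end ForwardBackward

/-- Nesterov's condition `t (n + 1) ^ 2 - t (n + 1) ≤ t n ^ 2` on the parameters `t` of an
accelerated method, strengthened by a slack `c * t n`. -/
structure IsMomentumSequence (c : ℝ) (t : ℕ → ℝ) : Prop where
  one_le : ∀ n, 1 ≤ t n
  monotone : Monotone t
  succ_sq_sub_le : ∀ n, t (n + 1) ^ 2 - t (n + 1) ≤ t n ^ 2 - c * t n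

namespace IsMomentumSequence

variable {c : ℝ} {t : ℕ → ℝ}

theorem pos (ht : IsMomentumSequence c t) (n : ℕ) : 0 < t n :=
  zero_lt_one.trans_le (ht.one_le n)

theorem coeff_nonneg (ht : IsMomentumSequence c t) (n : ℕ) : 0 ≤ (t n - 1) / t (n + 1) :=
  div_nonneg (sub_nonneg.2 (ht.one_le n)) (ht.pos _).le

theorem coeff_le_one (ht : IsMomentumSequence c t) (n : ℕ) : (t n - 1) / t (n + 1) ≤ 1 :=
  div_le_one_of_le₀ (by linarith [ht.monotone n.le_succ]) (ht.pos _).le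

theorem mul_coeff (ht : IsMomentumSequence c t) (n : ℕ) :
    t (n + 1) * ((t n - 1) / t (n + 1)) = t n - 1 :=
  mul_div_cancel₀ _ (ht.pos _).ne'

theorem succ_le_add_one (ht : IsMomentumSequence c t) (hc : 0 ≤ c) (n : ℕ) :
    t (n + 1) ≤ t n + 1 := by
  have := mul_nonneg hc (ht.pos n).le
  nlinarith [ht.succ_sq_sub_le n, ht.one_le n, ht.one_le (n + 1)]

end IsMomentumSequence

/-- Nesterov's parameters `(k + α - 2) / (α - 1)`, with `n = k - 2` because the gap `Ψ + Φ - min` is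
only known to be finite from `x 2` on. -/
noncomputable def nesterovParam (α : ℝ) (n : ℕ) : ℝ :=
  (n + α) / (α - 1)

theorem nesterovParam_sub_one_div_succ {α : ℝ} (hα : 1 < α) (n : ℕ) :
    (nesterovParam α n - 1) / nesterovParam α (n + 1) = (n + 1) / (n + 1 + α) := by
  have hsub : α - 1 ≠ 0 := (sub_pos.2 hα).ne'
  rw [nesterovParam, nesterovParam, div_sub_one hsub, div_div_div_cancel_right₀ hsub]
  push_cast
  congr 1
  ring

theorem isMomentumSequence_nesterovParam {α : ℝ} (hα : 2 ≤ α) :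
    IsMomentumSequence ((α - 3) / (α - 1)) (nesterovParam α) := by
  have hpos : 0 < α - 1 := by linarith
  refine ⟨fun n => ?_, fun m n hmn => ?_, fun n => ?_⟩
  · rw [nesterovParam, one_le_div hpos]
    linarith [n.cast_nonneg (α := ℝ)]
  · rw [nesterovParam, nesterovParam]
    gcongr
  · have hdiff : nesterovParam α n ^ 2 - (α - 3) / (α - 1) * nesterovParam α n
        - (nesterovParam α (n + 1) ^ 2 - nesterovParam α (n + 1)) = (α - 2) / (α - 1) ^ 2 := by
      rw [nesterovParam, nesterovParam]
      push_cast
      field_simp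
      ring
    rw [← sub_nonneg, hdiff]
    exact div_nonneg (sub_nonneg.2 hα) (sq_nonneg _)

/-- What the convergence analysis retains of an accelerated forward-backward method with parameters
`t`, relative to a minimizer `z`. The extrapolated point `y n` is computed from `x n` and
`x (n + 1)`, the next iterate is `x (n + 2)`, and `T n` is a multiple of the objective gap at
`x (n + 1)`. -/
structure IsInertialDescent (t T : ℕ → ℝ) (x y : ℕ → H) (z : H) : Prop where
  gap_nonneg : ∀ n, 0 ≤ T n
  extrapolation : ∀ n, y n = x (n + 1) + ((t n - 1) / t (n + 1)) • (x (n + 1) - x n)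
  gap_succ_add_step_le : ∀ n,
    T (n + 1) + ‖x (n + 2) - x (n + 1)‖ ^ 2 ≤ T n + ‖y n - x (n + 1)‖ ^ 2
  gap_succ_add_dist_le : ∀ n, T (n + 1) + ‖x (n + 2) - z‖ ^ 2 ≤ ‖y n - z‖ ^ 2

/-- The Lyapunov function of an inertial descent: the weighted gap plus the
squared distance from `z` to the point extrapolated from `x n` and `x (n + 1)` by the factor
`t n`. -/
def inertialEnergy (t T : ℕ → ℝ) (x : ℕ → H) (z : H) (n : ℕ) : ℝ :=
  t n ^ 2 * T n + ‖(1 - t n) • x n + t n • x (n + 1) - z‖ ^ 2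

namespace IsInertialDescent

variable {c : ℝ} {t T : ℕ → ℝ} {x y : ℕ → H} {z : H}

theorem inertialEnergy_succ_add_le (h : IsInertialDescent t T x y z)
    (ht : IsMomentumSequence c t) (n : ℕ) :
    inertialEnergy t T x z (n + 1) + c * (t n * T n) ≤ inertialEnergy t T x z n := by
  have hextrapolated : (1 - t n) • x n + t n • x (n + 1) - z
      = (1 - t (n + 1)) • x (n + 1) + t (n + 1) • y n - z := by
    rw [h.extrapolation, smul_add, smul_smul, ht.mul_coeff]
    module
  have iterate := mul_le_mul_of_nonneg_left (h.gap_succ_add_step_le n)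
    (mul_nonneg (ht.pos (n + 1)).le (sub_nonneg.2 (ht.one_le (n + 1))))
  have anchor := mul_le_mul_of_nonneg_left (h.gap_succ_add_dist_le n) (ht.pos (n + 1)).le
  have slack := mul_le_mul_of_nonneg_right (ht.succ_sq_sub_le n) (h.gap_nonneg n)
  rw [inertialEnergy, inertialEnergy, hextrapolated, norm_sq_combo_sub, norm_sq_combo_sub]
  linarith

theorem summable_mul_gap (h : IsInertialDescent t T x y z) (ht : IsMomentumSequence c t)
    (hc : 0 < c) : Summable fun n => t n * T n := by
  have energy_nonneg (n : ℕ) : 0 ≤ inertialEnergy t T x z n :=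
    add_nonneg (mul_nonneg (sq_nonneg _) (h.gap_nonneg n)) (sq_nonneg _)
  have weighted_nonneg (n : ℕ) : 0 ≤ c * (t n * T n) :=
    mul_nonneg hc.le (mul_nonneg (ht.pos n).le (h.gap_nonneg n))
  refine (summable_mul_left_iff hc.ne').1
    (summable_of_succ_add_le_add energy_nonneg weighted_nonneg summable_zero fun n => ?_)
  simpa using h.inertialEnergy_succ_add_le ht n

theorem mul_norm_sq_sub_eq (h : IsInertialDescent t T x y z) (ht : IsMomentumSequence c t)
    (n : ℕ) :
    t (n + 1) ^ 2 * ‖y n - x (n + 1)‖ ^ 2 = (t n - 1) ^ 2 * ‖x (n + 1) - x n‖ ^ 2 := by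
  rw [h.extrapolation, add_sub_cancel_left, norm_smul, mul_pow, Real.norm_eq_abs, sq_abs,
    ← mul_assoc, ← mul_pow, ht.mul_coeff]

theorem summable_mul_norm_sq_sub (h : IsInertialDescent t T x y z)
    (ht : IsMomentumSequence c t) (hc : 0 < c) :
    Summable fun n => t n * ‖x (n + 1) - x n‖ ^ 2 := by
  refine summable_of_succ_add_le_add (m := 0)
    (a := fun n => t n ^ 2 * (T n + ‖x (n + 1) - x n‖ ^ 2)) (fun n => ?_)
    (fun n => mul_nonneg (ht.pos n).le (sq_nonneg _)) ((h.summable_mul_gap ht hc).mul_left 2)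
    fun n => ?_
  · exact mul_nonneg (sq_nonneg _) (add_nonneg (h.gap_nonneg n) (sq_nonneg _))
  · have iterate := mul_le_mul_of_nonneg_left (h.gap_succ_add_step_le n) (sq_nonneg (t (n + 1)))
    rw [mul_add _ (T n), h.mul_norm_sq_sub_eq ht] at iterate
    have growth : (t (n + 1) ^ 2 - t n ^ 2) * T n ≤ 2 * t n * T n := by
      refine mul_le_mul_of_nonneg_right ?_ (h.gap_nonneg n)
      linarith [ht.succ_sq_sub_le n, ht.succ_le_add_one hc.le n, ht.one_le n,
        mul_pos hc (ht.pos n)]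
    have inertia : 0 ≤ (t n - 1) * ‖x (n + 1) - x n‖ ^ 2 :=
      mul_nonneg (sub_nonneg.2 (ht.one_le n)) (sq_nonneg _)
    linarith

theorem norm_sq_sub_increment_le (h : IsInertialDescent t T x y z) (n : ℕ) :
    ‖x (n + 2) - z‖ ^ 2 - ‖x (n + 1) - z‖ ^ 2
      ≤ (t n - 1) / t (n + 1) * (‖x (n + 1) - z‖ ^ 2 - ‖x n - z‖ ^ 2)
        + (t n - 1) / t (n + 1) * (1 + (t n - 1) / t (n + 1)) * ‖x (n + 1) - x n‖ ^ 2 := by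
  have hy : y n - z = (1 - (1 + (t n - 1) / t (n + 1))) • x n
      + (1 + (t n - 1) / t (n + 1)) • x (n + 1) - z := by
    rw [h.extrapolation]
    module
  have anchor := h.gap_succ_add_dist_le n
  rw [hy, norm_sq_combo_sub] at anchor
  linarith [h.gap_nonneg (n + 1)]

theorem mul_posPart_increment_succ_add_le (h : IsInertialDescent t T x y z)
    (ht : IsMomentumSequence c t) (n : ℕ) :
    t (n + 1) * (‖x (n + 2) - z‖ ^ 2 - ‖x (n + 1) - z‖ ^ 2)⁺
        + (‖x (n + 1) - z‖ ^ 2 - ‖x n - z‖ ^ 2)⁺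
      ≤ t n * (‖x (n + 1) - z‖ ^ 2 - ‖x n - z‖ ^ 2)⁺ + 2 * (t n * ‖x (n + 1) - x n‖ ^ 2) := by
  set β := (t n - 1) / t (n + 1)
  set δ := ‖x (n + 1) - z‖ ^ 2 - ‖x n - z‖ ^ 2
  set σ := ‖x (n + 1) - x n‖ ^ 2
  have hβ : 0 ≤ β := ht.coeff_nonneg n
  have hσ : 0 ≤ σ := sq_nonneg _
  have posPart_succ_le :
      (‖x (n + 2) - z‖ ^ 2 - ‖x (n + 1) - z‖ ^ 2)⁺ ≤ β * δ⁺ + 2 * (β * σ) := by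
    refine sup_le ((h.norm_sq_sub_increment_le n).trans ?_) (by positivity)
    have hmul : β * δ ≤ β * δ⁺ := mul_le_mul_of_nonneg_left (le_posPart δ) hβ
    have hsq : β * (β * σ) ≤ 1 * (β * σ) :=
      mul_le_mul_of_nonneg_right (ht.coeff_le_one n) (by positivity)
    linarith
  calc t (n + 1) * (‖x (n + 2) - z‖ ^ 2 - ‖x (n + 1) - z‖ ^ 2)⁺ + δ⁺
      ≤ t (n + 1) * (β * δ⁺ + 2 * (β * σ)) + δ⁺ := by gcongr; exact (ht.pos _).le
    _ = t (n + 1) * β * (δ⁺ + 2 * σ) + δ⁺ := by ring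
    _ = t n * δ⁺ + 2 * (t n * σ) - 2 * σ := by rw [ht.mul_coeff]; ring
    _ ≤ t n * δ⁺ + 2 * (t n * σ) := by linarith

theorem exists_tendsto_norm_sub (h : IsInertialDescent t T x y z)
    (ht : IsMomentumSequence c t) (hc : 0 < c) :
    ∃ l, Tendsto (fun n => ‖x n - z‖) atTop (𝓝 l) := by
  have summable_posPart : Summable fun n => (‖x (n + 1) - z‖ ^ 2 - ‖x n - z‖ ^ 2)⁺ :=
    summable_of_succ_add_le_add
      (a := fun n => t n * (‖x (n + 1) - z‖ ^ 2 - ‖x n - z‖ ^ 2)⁺)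
      (fun n => mul_nonneg (ht.pos n).le (posPart_nonneg _)) (fun n => posPart_nonneg _)
      ((h.summable_mul_norm_sq_sub ht hc).mul_left 2)
      (h.mul_posPart_increment_succ_add_le ht)
  obtain ⟨l, hl⟩ := exists_tendsto_of_succ_le_add (a := fun n => ‖x n - z‖ ^ 2)
    (fun n => sq_nonneg _) summable_posPart fun n => sub_le_iff_le_add'.1 (le_posPart _)
  exact ⟨√l, hl.sqrt.congr fun n => Real.sqrt_sq (norm_nonneg _)⟩

end IsInertialDescent

theorem isInertialDescent_of_isProxPoint {Ψ : H → EReal} {Φ : H → ℝ} {Φ' : H → H} {L : ℝ≥0}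
    {s : ℝ} {t : ℕ → ℝ} {x y : ℕ → H} {z : H} (hs : 0 < s) (hsL : s * L ≤ 1)
    (hΨ_bot : ∀ u, Ψ u ≠ ⊥) (hΨ : IsConvexEReal Ψ) (hΦ : ConvexOn ℝ Set.univ Φ)
    (hΦ' : ∀ u, HasFDerivAt Φ (innerSL ℝ (Φ' u)) u) (hL : LipschitzWith L Φ')
    (hy : ∀ n, y n = x (n + 1) + ((t n - 1) / t (n + 1)) • (x (n + 1) - x n))
    (hx : ∀ n, IsProxPoint Ψ s (y n - s • Φ' (y n)) (x (n + 2)))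
    (hx_top : ∀ n, Ψ (x (n + 1)) ≠ ⊤) (hz_top : Ψ z ≠ ⊤)
    (hz : ∀ u, Ψ z + (Φ z : EReal) ≤ Ψ u + (Φ u : EReal)) :
    IsInertialDescent t
      (fun n => 2 * s * (realObjective Ψ Φ (x (n + 1)) - realObjective Ψ Φ z)) x y z where
  gap_nonneg n := mul_nonneg (by positivity) <| sub_nonneg.2 <|
    toReal_add_le_toReal_add (hz _) (hΨ_bot z) (hx_top n) (hΨ_bot _)
  extrapolation := hy
  gap_succ_add_step_le n := by
    have := (hx n).realObjective_gap_add_norm_sq_le hs hsL hΨ_bot hΨ hΦ hΦ' hL (hx_top n)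
    linarith
  gap_succ_add_dist_le n :=
    (hx n).realObjective_gap_add_norm_sq_le hs hsL hΨ_bot hΨ hΦ hΦ' hL hz_top

theorem fista_anchor_limit_exists_general {Ψ : H → EReal} {Φ : H → ℝ} {Φ' : H → H} {L : ℝ≥0}
    {s α : ℝ} (hΨ_bot : ∀ u, Ψ u ≠ ⊥) (hΨ_proper : ∃ u, Ψ u ≠ ⊤) (hΨ : IsConvexEReal Ψ)
    (hΦ : ConvexOn ℝ Set.univ Φ) (hΦ' : ∀ u, HasFDerivAt Φ (innerSL ℝ (Φ' u)) u)
    (hL : LipschitzWith L Φ') (hα : 3 < α) (hs : 0 < s) (hsL : s * L ≤ 1) {x y : ℕ → H}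
    (hy : ∀ k : ℕ, 1 ≤ k →
      y k = x k + (((k : ℝ) - 1) / ((k : ℝ) + α - 1)) • (x k - x (k - 1)))
    (hx : ∀ k : ℕ, 1 ≤ k → IsProxPoint Ψ s (y k - s • Φ' (y k)) (x (k + 1)))
    {z : H} (hz : ∀ u, Ψ z + (Φ z : EReal) ≤ Ψ u + (Φ u : EReal)) :
    ∃ l : ℝ, Tendsto (fun k : ℕ => ‖x k - z‖) atTop (𝓝 l) := by
  obtain ⟨u, hu⟩ := hΨ_proper
  have hx_top (n : ℕ) : Ψ (x (n + 2)) ≠ ⊤ := add_coe_ne_top_of_le (hx (n + 1) n.succ_pos u) hu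
  have extrapolation (n : ℕ) : y (n + 2) = x (n + 2)
      + ((nesterovParam α n - 1) / nesterovParam α (n + 1)) • (x (n + 2) - x (n + 1)) := by
    rw [nesterovParam_sub_one_div_succ (by linarith), hy (n + 2) (Nat.le_add_left 1 _)]
    congr 3 <;> push_cast <;> ring
  have descent := isInertialDescent_of_isProxPoint (x := fun n => x (n + 1))
    (y := fun n => y (n + 2)) hs hsL hΨ_bot hΨ hΦ hΦ' hL extrapolation
    (fun n => hx (n + 2) (Nat.le_add_left 1 _)) hx_top (add_coe_ne_top_of_le (hz u) hu) hz
  obtain ⟨l, hl⟩ := descent.exists_tendsto_norm_sub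
    (isMomentumSequence_nesterovParam (by linarith)) (div_pos (by linarith) (by linarith))
  exact ⟨l, (tendsto_add_atTop_iff_nat 1).1 hl⟩

end InnerProduct

/-- For every minimizer `x*` of `Ψ + Φ`, `lim ‖x_k - x*‖` exists. -/
theorem fista_anchor_limit_exists
    {H : Type*} [NormedAddCommGroup H] [InnerProductSpace ℝ H] [CompleteSpace H]
    (Ψ : H → EReal) (Φ : H → ℝ) (Φ' : H → H) (L s α : ℝ)
    (hΨ_ne_bot : ∀ u, Ψ u ≠ ⊥) (hΨ_proper : ∃ u, Ψ u ≠ ⊤)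
    (hΨ_lsc : LowerSemicontinuous Ψ)
    (hΨ_convex : ∀ u v : H, ∀ a b : ℝ, 0 ≤ a → 0 ≤ b → a + b = 1 →
      Ψ (a • u + b • v) ≤ (a : EReal) * Ψ u + (b : EReal) * Ψ v)
    (hΦ_convex : ConvexOn ℝ Set.univ Φ)
    (hΦ_diff : ∀ u, HasGradientAt Φ (Φ' u) u)
    (hΦ_lip : LipschitzWith (Real.toNNReal L) Φ')
    (hα : 3 < α) (hs : 0 < s) (hsL : s < 1 / L)
    (x y : ℕ → H)
    (hy : ∀ k : ℕ, 1 ≤ k →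
      y k = x k + (((k : ℝ) - 1) / ((k : ℝ) + α - 1)) • (x k - x (k - 1)))
    (hx : ∀ k : ℕ, 1 ≤ k → ∀ u : H,
      Ψ (x (k + 1)) + ((1 / (2 * s) * ‖x (k + 1) - (y k - s • Φ' (y k))‖ ^ 2 : ℝ) : EReal)
        ≤ Ψ u + ((1 / (2 * s) * ‖u - (y k - s • Φ' (y k))‖ ^ 2 : ℝ) : EReal))
    (xstar : H)
    (hxstar : ∀ u, Ψ xstar + (Φ xstar : EReal) ≤ Ψ u + (Φ u : EReal)) :
    ∀ z : H, (∀ u, Ψ z + (Φ z : EReal) ≤ Ψ u + (Φ u : EReal)) →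
      ∃ l : ℝ, Tendsto (fun k : ℕ => ‖x k - z‖) atTop (nhds l) := by
  have hL : 0 < L := one_div_pos.1 (hs.trans hsL)
  exact fun z hz => fista_anchor_limit_exists_general hΨ_ne_bot hΨ_proper hΨ_convex hΦ_convex
    hΦ_diff hΦ_lip hα hs (by simpa [hL.le] using ((lt_div_iff₀ hL).1 hsL).le) hy hx hz
end

section
/- Let H be a real Hilbert space, Ψ : H → ℝ ∪ {+∞} proper, lower-semicontinuous and convex, and Φ : H → ℝ convex and continuously differentiable with L-Lipschitz continuous gradient. Suppose S = argmin(Ψ + Φ) is nonempty. Let (g_k) be a sequence in H with Σ_{k=1}^∞ k‖g_k‖ < +∞, and let (x_k) be generated by the inexact accelerated forward-backward algorithm y_k = x_k + ((k−1)/(k+α−1))(x_k − x_{k−1}), x_{k+1} = prox_{sΨ}(y_k − s(∇Φ(y_k) − g_k)), with α > 3 and 0 < s < 1/L. Then lim_{k→∞} k² ((Ψ + Φ)(x_k) − min(Ψ + Φ)) = 0, lim_{k→∞} k ‖x_{k+1} − x_k‖ = 0, and the sequence (x_k) converges weakly to a point of S. -/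
open Filter RealInnerProductSpace

open Set Topology NNReal

/-!
Write `t = n + 1 + a`, `a = α - 1`, `Θ = Ψ + Φ`, and let `u` be a minimizer of `Θ`. Testing the
forward–backward inequality at a convex combination of the current iterate and `u` gives a Lyapunov
function `t² (Θ(x) - Θ(u)) + a² / (2 s) ‖z - u‖²`, with `z` an extrapolation of `x`, whose decrease
dominates `(a - 2) t (Θ(x) - Θ(u))`; the errors enter through the square root of the function
itself, so a Gronwall-type estimate shows that it converges and that `∑ t (Θ(x) - Θ(u)) < ∞`.
Testing at the current iterate instead shows that the energy `t² (Θ(x) - Θ(u) + ‖ẋ‖² / (2 s))`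
converges and that `∑ t ‖ẋ‖² < ∞`, where `ẋ` is the increment of `x`. Hence the energy is summable
against the divergent weights `1 / t`, so its limit is `0`, which is both rates. The limit of the
Lyapunov function then yields that of `‖x - u‖` for every minimizer `u`, and Opial's lemma together
with weak lower semicontinuity of `Θ` gives weak convergence.
-/

section RealSequences

theorem summable_and_exists_tendsto_of_add_le_add {e b f : ℕ → ℝ} (he : ∀ n, 0 ≤ e n)
    (hb : ∀ n, 0 ≤ b n) (hf : ∀ n, 0 ≤ f n) (hfs : Summable f)
    (h : ∀ n, e (n + 1) + b n ≤ e n + f n) :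
    Summable b ∧ ∃ l, Tendsto e atTop (𝓝 l) := by
  have hsum_f (n : ℕ) : ∑ i ∈ Finset.range n, f i ≤ ∑' i, f i :=
    hfs.sum_le_tsum _ fun i _ ↦ hf i
  have htelescope (n : ℕ) :
      e n + ∑ i ∈ Finset.range n, b i ≤ e 0 + ∑ i ∈ Finset.range n, f i := by
    induction n with
    | zero => simp
    | succ n ih => rw [Finset.sum_range_succ, Finset.sum_range_succ]; linarith [h n]
  have hanti : Antitone fun n ↦ e n - ∑ i ∈ Finset.range n, f i :=
    antitone_nat_of_succ_le fun n ↦ by rw [Finset.sum_range_succ]; linarith [h n, hb n]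
  have hbdd : BddBelow (range fun n ↦ e n - ∑ i ∈ Finset.range n, f i) :=
    ⟨-∑' i, f i, forall_mem_range.2 fun n ↦ by linarith [he n, hsum_f n]⟩
  refine ⟨summable_of_sum_range_le (c := e 0 + ∑' i, f i) hb fun n ↦ ?_, _,
    ((tendsto_atTop_ciInf hanti hbdd).add hfs.hasSum.tendsto_sum_nat).congr fun n ↦ ?_⟩
  · linarith [htelescope n, he n, hsum_f n]
  · ring

theorem sqrt_le_sqrt_add_of_le_add_mul_sqrt {u v δ : ℝ} (hu : 0 ≤ u) (hv : 0 ≤ v) (hδ : 0 ≤ δ)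
    (h : v ≤ u + δ * √v) : √v ≤ √u + δ := by
  by_contra! hlt
  nlinarith [Real.sq_sqrt hu, Real.sq_sqrt hv, Real.sqrt_nonneg u, Real.sqrt_nonneg v]

theorem summable_and_exists_tendsto_of_add_le_add_mul_sqrt {e b f δ : ℕ → ℝ} (he : ∀ n, 0 ≤ e n)
    (hb : ∀ n, 0 ≤ b n) (hf : ∀ n, 0 ≤ f n) (hfs : Summable f) (hδ : ∀ n, 0 ≤ δ n)
    (hδs : Summable δ) (h : ∀ n, e (n + 1) + b n ≤ e n + f n + δ n * √(e (n + 1))) :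
    Summable b ∧ ∃ l, Tendsto e atTop (𝓝 l) := by
  let E (n : ℕ) : ℝ := e n + (∑' i, f i - ∑ i ∈ Finset.range n, f i)
  have he_le (n : ℕ) : e n ≤ E n :=
    le_add_of_nonneg_right (sub_nonneg.2 (hfs.sum_le_tsum _ fun i _ ↦ hf i))
  have hE (n : ℕ) : 0 ≤ E n := (he n).trans (he_le n)
  have hstep (n : ℕ) : E (n + 1) ≤ E n + δ n * √(E (n + 1)) := by
    have hsqrt := mul_le_mul_of_nonneg_left (Real.sqrt_le_sqrt (he_le (n + 1))) (hδ n)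
    have hrange := Finset.sum_range_succ f n
    simp only [E] at hsqrt ⊢
    linarith [h n, hb n]
  obtain ⟨-, r, hr⟩ := summable_and_exists_tendsto_of_add_le_add (e := fun n ↦ √(E n)) (b := 0)
    (fun n ↦ Real.sqrt_nonneg _) (fun _ ↦ le_rfl) hδ hδs fun n ↦ by
      simpa using sqrt_le_sqrt_add_of_le_add_mul_sqrt (hE n) (hE (n + 1)) (hδ n) (hstep n)
  obtain ⟨M, hM⟩ := hr.bddAbove_range
  have hsqrt_le (n : ℕ) : √(e n) ≤ M := (Real.sqrt_le_sqrt (he_le n)).trans (hM (mem_range_self n))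
  have hM0 : 0 ≤ M := (Real.sqrt_nonneg _).trans (hsqrt_le 0)
  refine summable_and_exists_tendsto_of_add_le_add he hb
    (fun n ↦ add_nonneg (hf n) (mul_nonneg (hδ n) hM0)) (hfs.add (hδs.mul_right M)) fun n ↦ ?_
  linarith [h n, mul_le_mul_of_nonneg_left (hsqrt_le (n + 1)) (hδ n)]

theorem eq_zero_of_tendsto_of_summable_mul {e w : ℕ → ℝ} {l : ℝ} (he : Tendsto e atTop (𝓝 l))
    (hw : ¬Summable w) (hs : Summable fun n ↦ e n * w n) : l = 0 := by
  by_contra hl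
  have hone : (fun _ ↦ (1 : ℝ)) =O[atTop] e :=
    (Asymptotics.isBigO_const_left_iff_pos_le_norm one_ne_zero).2 ⟨‖l‖ / 2,
      half_pos (norm_pos_iff.2 hl),
      he.norm.eventually_const_le (half_lt_self (norm_pos_iff.2 hl))⟩
  exact hw <| summable_of_isBigO_nat' hs <| by
    simpa only [one_mul] using hone.mul (Asymptotics.isBigO_refl w atTop)

end RealSequences

section WeakTopology

theorem lowerSemicontinuous_comp_toWeakSpace_symm {E β : Type*} [AddCommGroup E] [Module ℝ E]
    [TopologicalSpace E] [IsTopologicalAddGroup E] [ContinuousSMul ℝ E] [LocallyConvexSpace ℝ E]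
    [LinearOrder β] {f : E → β} (hf : LowerSemicontinuous f) (hconv : QuasiconvexOn ℝ univ f) :
    LowerSemicontinuous fun u : WeakSpace ℝ E ↦ f ((toWeakSpace ℝ E).symm u) := by
  refine lowerSemicontinuous_iff_isClosed_preimage.2 fun c ↦ ?_
  have hc : Convex ℝ (f ⁻¹' Iic c) := by simpa [preimage] using hconv c
  have himage : (fun u : WeakSpace ℝ E ↦ f ((toWeakSpace ℝ E).symm u)) ⁻¹' Iic c
      = toWeakSpace ℝ E '' (f ⁻¹' Iic c) :=
    ((toWeakSpace ℝ E).image_eq_preimage_symm (f ⁻¹' Iic c)).symm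
  rw [himage, ← (hf.isClosed_preimage c).closure_eq, hc.toWeakSpace_closure ℝ]
  exact isClosed_closure

theorem le_of_mapClusterPt_of_tendsto {ι X β : Type*} [TopologicalSpace X] [LinearOrder β]
    [DenselyOrdered β] [TopologicalSpace β] [OrderTopology β] {f : X → β} {x : ι → X} {p : X}
    {c : β} {l : Filter ι} (hf : LowerSemicontinuousAt f p) (hp : MapClusterPt p l x)
    (hc : Tendsto (fun i ↦ f (x i)) l (𝓝 c)) : f p ≤ c := by
  by_contra! hlt
  obtain ⟨r, hcr, hrp⟩ := exists_between hlt
  obtain ⟨i, hri, hir⟩ :=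
    ((hp.frequently (hf r hrp)).and_eventually (hc.eventually_lt_const hcr)).exists
  exact hri.not_gt hir

theorem le_of_mapClusterPt_toWeakSpace {ι E β : Type*} [AddCommGroup E] [Module ℝ E]
    [TopologicalSpace E] [IsTopologicalAddGroup E] [ContinuousSMul ℝ E] [LocallyConvexSpace ℝ E]
    [LinearOrder β] [DenselyOrdered β] [TopologicalSpace β] [OrderTopology β] {f : E → β}
    {x : ι → E} {p : E} {c : β} {l : Filter ι} (hf : LowerSemicontinuous f)
    (hconv : QuasiconvexOn ℝ univ f)
    (hp : MapClusterPt (toWeakSpace ℝ E p) l fun i ↦ toWeakSpace ℝ E (x i))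
    (hc : Tendsto (fun i ↦ f (x i)) l (𝓝 c)) : f p ≤ c := by
  have hweak := lowerSemicontinuous_comp_toWeakSpace_symm hf hconv (toWeakSpace ℝ E p)
  simpa using! le_of_mapClusterPt_of_tendsto hweak hp (by simpa using! hc)

theorem eq_of_mapClusterPt_of_tendsto {ι X : Type*} [TopologicalSpace X] [T2Space X] {x : ι → X}
    {p q : X} {l : Filter ι} (hp : MapClusterPt p l x) (hq : Tendsto x l (𝓝 q)) : p = q :=
  eq_of_nhds_neBot (ClusterPt.mono hp hq)

variable {ι H : Type*} [NormedAddCommGroup H] [InnerProductSpace ℝ H]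

theorem continuous_inner_toWeakSpace_symm (v : H) :
    Continuous fun u : WeakSpace ℝ H ↦ ⟪(toWeakSpace ℝ H).symm u, v⟫ := by
  simp_rw [real_inner_comm v]
  exact WeakBilin.eval_continuous (topDualPairing ℝ H).flip (innerSL ℝ v)

theorem tendsto_inner_of_tendsto_toWeakSpace {x : ι → H} {p : H} {l : Filter ι}
    (h : Tendsto (fun i ↦ toWeakSpace ℝ H (x i)) l (𝓝 (toWeakSpace ℝ H p))) (v : H) :
    Tendsto (fun i ↦ ⟪x i, v⟫) l (𝓝 ⟪p, v⟫) := by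
  simpa using! ((continuous_inner_toWeakSpace_symm v).tendsto _).comp h

theorem isCompact_toWeakSpace_image_closedBall [CompleteSpace H] (R : ℝ) :
    IsCompact (toWeakSpace ℝ H '' Metric.closedBall 0 R) := by
  let riesz (φ : WeakDual ℝ H) : WeakSpace ℝ H :=
    toWeakSpace ℝ H ((InnerProductSpace.toDual ℝ H).symm (WeakDual.toStrongDual φ))
  have hriesz : Continuous riesz := WeakBilin.continuous_of_continuous_eval _ fun f ↦ by
    refine (WeakDual.eval_continuous ((InnerProductSpace.toDual ℝ H).symm f)).congr fun φ ↦ ?_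
    change φ _ = f ((InnerProductSpace.toDual ℝ H).symm (WeakDual.toStrongDual φ))
    rw [← InnerProductSpace.toDual_symm_apply (y := f), real_inner_comm,
      InnerProductSpace.toDual_symm_apply, WeakDual.toStrongDual_apply]
  have himage : toWeakSpace ℝ H '' Metric.closedBall 0 R =
      riesz '' (WeakDual.toStrongDual ⁻¹' Metric.closedBall 0 R) := by
    refine Subset.antisymm ?_ ?_
    · rintro _ ⟨u, hu, rfl⟩
      exact ⟨StrongDual.toWeakDual (InnerProductSpace.toDual ℝ H u), by simpa using hu,
        by simp [riesz]⟩
    · rintro _ ⟨φ, hφ, rfl⟩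
      exact mem_image_of_mem _ (by simpa using hφ)
  rw [himage]
  exact (WeakDual.isCompact_closedBall 0 R).image hriesz

theorem exists_tendsto_toWeakSpace_of_forall_tendsto_norm_sub [CompleteSpace H] {x : ι → H}
    {l : Filter ι} [l.NeBot] {S : Set H} (hS : S.Nonempty)
    (hnorm : ∀ u ∈ S, ∃ r, Tendsto (fun i ↦ ‖x i - u‖) l (𝓝 r))
    (hcluster : ∀ p, MapClusterPt (toWeakSpace ℝ H p) l (fun i ↦ toWeakSpace ℝ H (x i)) → p ∈ S) :
    ∃ p ∈ S, Tendsto (fun i ↦ toWeakSpace ℝ H (x i)) l (𝓝 (toWeakSpace ℝ H p)) := by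
  obtain ⟨u, hu⟩ := hS
  obtain ⟨r, hr⟩ := hnorm u hu
  have hbounded : ∀ᶠ i in l,
      toWeakSpace ℝ H (x i) ∈ toWeakSpace ℝ H '' Metric.closedBall 0 (r + 1 + ‖u‖) := by
    filter_upwards [hr.eventually_le_const (lt_add_one r)] with i hi
    refine mem_image_of_mem _ (mem_closedBall_zero_iff.2 ?_)
    linarith [norm_sub_norm_le (x i) u]
  have hcompact := isCompact_toWeakSpace_image_closedBall (H := H) (r + 1 + ‖u‖)
  obtain ⟨_, ⟨p, -, rfl⟩, hp⟩ := hcompact.exists_mapClusterPt_of_frequently hbounded.frequently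
  refine ⟨p, hcluster p hp, hcompact.tendsto_nhds_of_unique_mapClusterPt hbounded ?_⟩
  rintro _ ⟨q, -, rfl⟩ hq
  obtain ⟨a, ha⟩ := hnorm p (hcluster p hp)
  obtain ⟨b, hb⟩ := hnorm q (hcluster q hq)
  have hinner : Tendsto (fun i ↦ ⟪x i, q - p⟫) l
      (𝓝 ((a ^ 2 - b ^ 2 + ‖q‖ ^ 2 - ‖p‖ ^ 2) / 2)) := by
    refine (((((ha.pow 2).sub (hb.pow 2)).add_const _).sub_const _).div_const 2).congr fun i ↦ ?_
    rw [norm_sub_sq_real, norm_sub_sq_real, inner_sub_right]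
    ring
  have hlimit {w : H}
      (hw : MapClusterPt (toWeakSpace ℝ H w) l (fun i ↦ toWeakSpace ℝ H (x i))) :
      ⟪w, q - p⟫ = (a ^ 2 - b ^ 2 + ‖q‖ ^ 2 - ‖p‖ ^ 2) / 2 := by
    have hinner_cluster := hw.continuousAt_comp
      (continuous_inner_toWeakSpace_symm (q - p)).continuousAt
    exact eq_of_mapClusterPt_of_tendsto hinner_cluster hinner
  have hself : ⟪q - p, q - p⟫ = 0 := by rw [inner_sub_left, hlimit hq, hlimit hp, sub_self]
  rw [sub_eq_zero.1 (inner_self_eq_zero.1 hself)]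

end WeakTopology

section ConvexAnalysis

theorem add_sq_dist_le_of_isMinOn_of_strongConvexOn {E : Type*} [NormedAddCommGroup E]
    [NormedSpace ℝ E] {C : Set E} {m : ℝ} {f : E → ℝ} {p u : E} (hf : StrongConvexOn C m f)
    (hmin : IsMinOn f C p) (hp : p ∈ C) (hu : u ∈ C) : f p + m / 2 * ‖p - u‖ ^ 2 ≤ f u := by
  have hsegment : ∀ t ∈ Ioo (0 : ℝ) 1, f p + (1 - t) * (m / 2 * ‖p - u‖ ^ 2) ≤ f u := by
    rintro t ⟨ht0, ht1⟩
    have hconv := hf.2 hp hu (sub_nonneg.2 ht1.le) ht0.le (sub_add_cancel 1 t)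
    have hle := isMinOn_iff.1 hmin _
      (hf.1 hp hu (sub_nonneg.2 ht1.le) ht0.le (sub_add_cancel 1 t))
    refine le_of_mul_le_mul_left ?_ ht0
    simp only [smul_eq_mul] at hconv
    linarith
  have hlim : Tendsto (fun t : ℝ ↦ f p + (1 - t) * (m / 2 * ‖p - u‖ ^ 2)) (𝓝[>] 0)
      (𝓝 (f p + m / 2 * ‖p - u‖ ^ 2)) :=
    tendsto_nhdsWithin_of_tendsto_nhds <|
      (by fun_prop : Continuous fun t : ℝ ↦ f p + (1 - t) * (m / 2 * ‖p - u‖ ^ 2)).tendsto' _ _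
        (by ring)
  exact le_of_tendsto hlim (mem_of_superset (Ioo_mem_nhdsGT one_pos) hsegment)

variable {H : Type*} [NormedAddCommGroup H] [InnerProductSpace ℝ H] {C : Set H} {ψ : H → ℝ}

theorem strongConvexOn_add_mul_sq_norm_sub (hψ : ConvexOn ℝ C ψ) (c : ℝ) (w : H) :
    StrongConvexOn C (2 * c) fun u ↦ ψ u + c * ‖u - w‖ ^ 2 := by
  refine strongConvexOn_iff_convex.2 ?_
  have hlinear := ((-(2 * c)) • innerSL ℝ w).toLinearMap.convexOn hψ.1
  refine ((hψ.add hlinear).add_const (c * ‖w‖ ^ 2)).congr fun u _ ↦ ?_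
  simp only [Pi.add_apply, ContinuousLinearMap.coe_coe, smul_apply,
    innerSL_apply_apply, smul_eq_mul, norm_sub_sq_real, real_inner_comm u w]
  ring

variable [CompleteSpace H] {Φ : H → ℝ} {Φ' : H → H}

theorem hasDerivAt_comp_lineMap_s18 {G : H} {u v : H} {t : ℝ}
    (h : HasGradientAt Φ G (AffineMap.lineMap u v t)) :
    HasDerivAt (fun t : ℝ ↦ Φ (AffineMap.lineMap u v t)) ⟪G, v - u⟫ t := by
  simpa using! h.hasFDerivAt.comp_hasDerivAt t AffineMap.hasDerivAt_lineMap

theorem add_inner_gradient_le (hΦ : ConvexOn ℝ univ Φ) {G u : H} (hG : HasGradientAt Φ G u)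
    (v : H) : Φ u + ⟪G, v - u⟫ ≤ Φ v := by
  have hslope := (hΦ.comp_affineMap (AffineMap.lineMap u v : ℝ →ᵃ[ℝ] H)).le_slope_of_hasDerivAt
    (mem_univ 0) (mem_univ 1) zero_lt_one
    (hasDerivAt_comp_lineMap_s18 (by simpa using hG))
  simp only [slope_def_field, Function.comp_apply, AffineMap.lineMap_apply_one,
    AffineMap.lineMap_apply_zero, sub_zero, div_one] at hslope
  linarith

theorem le_add_inner_gradient_add_sq {K : ℝ≥0} (hΦ' : LipschitzWith K Φ')
    (hΦ : ∀ u, HasGradientAt Φ (Φ' u) u) (u v : H) :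
    Φ v ≤ Φ u + ⟪Φ' u, v - u⟫ + K / 2 * ‖v - u‖ ^ 2 := by
  let γ (t : ℝ) : H := AffineMap.lineMap u v t
  let D (t : ℝ) : ℝ := Φ (γ t) - (t * ⟪Φ' u, v - u⟫ + K / 2 * ‖v - u‖ ^ 2 * t ^ 2)
  have hD (t : ℝ) : HasDerivAt D
      (⟪Φ' (γ t), v - u⟫ - (⟪Φ' u, v - u⟫ + K * ‖v - u‖ ^ 2 * t)) t := by
    refine ((hasDerivAt_comp_lineMap_s18 (hΦ (γ t))).sub (((hasDerivAt_id t).mul_const _).add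
      ((hasDerivAt_pow 2 t).const_mul _))).congr_deriv ?_
    simp only [Nat.cast_ofNat]
    ring
  have hD_nonpos {t : ℝ} (ht : 0 ≤ t) :
      ⟪Φ' (γ t), v - u⟫ - (⟪Φ' u, v - u⟫ + K * ‖v - u‖ ^ 2 * t) ≤ 0 := by
    have hlip : ‖Φ' (γ t) - Φ' u‖ ≤ K * (t * ‖v - u‖) := by
      simpa [γ, dist_eq_norm, AffineMap.lineMap_apply, norm_smul, abs_of_nonneg ht] using
        hΦ'.dist_le_mul (γ t) u
    have hinner : ⟪Φ' (γ t) - Φ' u, v - u⟫ ≤ K * (t * ‖v - u‖) * ‖v - u‖ :=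
      (real_inner_le_norm _ _).trans (by gcongr)
    rw [inner_sub_left] at hinner
    linarith
  have hanti : AntitoneOn D (Icc 0 1) := antitoneOn_of_hasDerivWithinAt_nonpos (convex_Icc 0 1)
    (fun t _ ↦ (hD t).continuousAt.continuousWithinAt) (fun t _ ↦ (hD t).hasDerivWithinAt)
    fun t ht ↦ hD_nonpos (interior_subset ht).1
  have hle : D 1 ≤ D 0 :=
    hanti (left_mem_Icc.2 zero_le_one) (right_mem_Icc.2 zero_le_one) zero_le_one
  have hD_zero : D 0 = Φ u := by simp [D, γ]
  have hD_one : D 1 = Φ v - (⟪Φ' u, v - u⟫ + K / 2 * ‖v - u‖ ^ 2) := by simp [D, γ]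
  linarith

theorem forwardBackward_step_le {K : ℝ≥0} {s : ℝ} {y z u e : H} (hψ : ConvexOn ℝ C ψ)
    (hΦ : ConvexOn ℝ univ Φ) (hΦ_grad : ∀ u, HasGradientAt Φ (Φ' u) u)
    (hΦ' : LipschitzWith K Φ') (hs : 0 < s) (hsK : s * K ≤ 1)
    (hmin : IsMinOn (fun u ↦ ψ u + 1 / (2 * s) * ‖u - (y - s • (Φ' y - e))‖ ^ 2) C z)
    (hz : z ∈ C) (hu : u ∈ C) :
    ψ z + Φ z - (ψ u + Φ u) ≤
      1 / (2 * s) * (‖y - u‖ ^ 2 - ‖z - u‖ ^ 2) + ⟪e, z - u⟫ := by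
  have hprox := add_sq_dist_le_of_isMinOn_of_strongConvexOn
    (strongConvexOn_add_mul_sq_norm_sub hψ _ _) hmin hz hu
  have hexpand (v : H) : ‖v - (y - s • (Φ' y - e))‖ ^ 2 =
      ‖v - y‖ ^ 2 + 2 * s * ⟪Φ' y - e, v - y⟫ + ‖s • (Φ' y - e)‖ ^ 2 := by
    rw [sub_sub_eq_add_sub, add_sub_right_comm, norm_add_sq_real, real_inner_comm,
      real_inner_smul_left]
    ring
  have hupper := le_add_inner_gradient_add_sq hΦ' hΦ_grad y z
  have hlower := add_inner_gradient_le hΦ (hΦ_grad y) u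
  have hK : (K : ℝ) / 2 * ‖z - y‖ ^ 2 ≤ 1 / (2 * s) * ‖z - y‖ ^ 2 := by
    refine mul_le_mul_of_nonneg_right ?_ (sq_nonneg _)
    rw [div_le_div_iff₀ two_pos (by positivity)]
    linarith
  have hinner : ⟪Φ' y - e, z - y⟫ - ⟪Φ' y - e, u - y⟫ =
      ⟪Φ' y, z - y⟫ - ⟪Φ' y, u - y⟫ - ⟪e, z - u⟫ := by
    simp only [inner_sub_left, inner_sub_right]
    ring
  have hscale : 1 / (2 * s) * (2 * s * (⟪Φ' y - e, z - y⟫ - ⟪Φ' y - e, u - y⟫)) =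
      ⟪Φ' y - e, z - y⟫ - ⟪Φ' y - e, u - y⟫ := by
    field_simp
  simp only [hexpand] at hprox
  rw [norm_sub_rev y u]
  linarith

end ConvexAnalysis

section InertialDescent

/-- Abstract inertial descent scheme for `F` on `C`: the forward–backward iterates `x` seen only
through the extrapolation rule and the three-point inequality, where `e` collects the gradient
errors. In terms of the algorithm with parameter `α`, `a = α - 1` and the terms `x n`, `y n`, `e n`
here are its terms of index `n + 1`, `n + 2`, `n + 2`, because `x 1` need not lie in `C`. -/
structure InertialDescent {H : Type*} [NormedAddCommGroup H] [InnerProductSpace ℝ H] (F : H → ℝ)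
    (C : Set H) (a s : ℝ) (x y e : ℕ → H) : Prop where
  convexOn : ConvexOn ℝ C F
  mem (n : ℕ) : x (n + 1) ∈ C
  extrapolation (n : ℕ) :
    y n = x (n + 1) + (((n : ℝ) + 1) / ((n : ℝ) + 2 + a)) • (x (n + 1) - x n)
  descent (n : ℕ) {u : H} (hu : u ∈ C) : F (x (n + 2)) - F u ≤
    1 / (2 * s) * (‖y n - u‖ ^ 2 - ‖x (n + 2) - u‖ ^ 2) + ⟪e n, x (n + 2) - u⟫
  summable_error : Summable fun n : ℕ ↦ ((n : ℝ) + 2) * ‖e n‖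

namespace InertialDescent

variable {H : Type*} [NormedAddCommGroup H] [InnerProductSpace ℝ H]

/-- The extrapolated point whose distance to a minimizer enters the Lyapunov function; in
continuous time it is `x + (t / a) • ẋ`. -/
noncomputable def momentumPoint (a : ℝ) (x : ℕ → H) (n : ℕ) : H :=
  x (n + 1) + (((n : ℝ) + 1) / a) • (x (n + 1) - x n)

/-- The Lyapunov function of the scheme relative to the point `u`. -/
noncomputable def lyapunov (F : H → ℝ) (a s : ℝ) (x : ℕ → H) (u : H) (n : ℕ) : ℝ :=
  ((n : ℝ) + 1 + a) ^ 2 * (F (x (n + 1)) - F u) + a ^ 2 / (2 * s) * ‖momentumPoint a x n - u‖ ^ 2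

/-- The mechanical energy of the scheme, potential (relative to the value at `u`) plus kinetic,
scaled by the square of the time `n + 1 + a`. -/
noncomputable def energy (F : H → ℝ) (a s : ℝ) (x : ℕ → H) (u : H) (n : ℕ) : ℝ :=
  ((n : ℝ) + 1 + a) ^ 2 * (F (x (n + 1)) - F u + 1 / (2 * s) * ‖x (n + 1) - x n‖ ^ 2)

variable {F : H → ℝ} {C : Set H} {a s : ℝ} {x y e : ℕ → H} {u : H}

theorem gap_nonneg (h : InertialDescent F C a s x y e) (hmin : IsMinOn F C u) (n : ℕ) :
    0 ≤ F (x (n + 1)) - F u :=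
  sub_nonneg.2 (hmin (h.mem n))

theorem smul_momentumPoint_sub_eq (h : InertialDescent F C a s x y e) (ha : 0 < a) (u : H)
    (n : ℕ) :
    (a / ((n : ℝ) + 2 + a)) • (momentumPoint a x n - u) =
      y n - ((((n : ℝ) + 2) / ((n : ℝ) + 2 + a)) • x (n + 1) + (a / ((n : ℝ) + 2 + a)) • u) := by
  rw [h.extrapolation, momentumPoint]
  match_scalars <;> field_simp
  ring

theorem smul_momentumPoint_succ_sub_eq (ha : 0 < a) (x : ℕ → H) (u : H) (n : ℕ) :
    (a / ((n : ℝ) + 2 + a)) • (momentumPoint a x (n + 1) - u) =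
      x (n + 2) -
        ((((n : ℝ) + 2) / ((n : ℝ) + 2 + a)) • x (n + 1) + (a / ((n : ℝ) + 2 + a)) • u) := by
  rw [momentumPoint]
  push_cast
  match_scalars <;> field_simp <;> ring

theorem sq_mul_gap_succ_le (h : InertialDescent F C a s x y e) (ha : 0 < a) (hu : u ∈ C) (n : ℕ) :
    ((n : ℝ) + 2 + a) ^ 2 * (F (x (n + 2)) - F u) ≤
      ((n : ℝ) + 2) * ((n : ℝ) + 2 + a) * (F (x (n + 1)) - F u) +
      a ^ 2 / (2 * s) *
        (‖momentumPoint a x n - u‖ ^ 2 - ‖momentumPoint a x (n + 1) - u‖ ^ 2) +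
      ((n : ℝ) + 2 + a) * (a * ⟪e n, momentumPoint a x (n + 1) - u⟫) := by
  -- Testing the descent inequality at the convex combination of `x (n + 1)` and `u` below turns
  -- both of its square distances into multiples of `‖momentumPoint a x · - u‖ ^ 2`.
  have hy := h.smul_momentumPoint_sub_eq ha u n
  have hx := smul_momentumPoint_succ_sub_eq ha x u n
  generalize hθ : (n : ℝ) + 2 + a = t at hx hy ⊢
  have ht : 0 < t := by rw [← hθ]; positivity
  have hq : 0 ≤ ((n : ℝ) + 2) / t := by positivity
  have hweights : ((n : ℝ) + 2) / t + a / t = 1 := by rw [← add_div, hθ, div_self ht.ne']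
  have hconv := h.convexOn.2 (h.mem n) hu hq (by positivity) hweights
  have hdescent := h.descent n (h.convexOn.1 (h.mem n) hu hq (by positivity) hweights)
  rw [← hy, ← hx, norm_smul, norm_smul, mul_pow, mul_pow, real_inner_smul_right,
    Real.norm_of_nonneg (by positivity)] at hdescent
  have hunscaled : F (x (n + 2)) - F u ≤ ((n : ℝ) + 2) / t * (F (x (n + 1)) - F u) +
      1 / (2 * s) * ((a / t) ^ 2 * ‖momentumPoint a x n - u‖ ^ 2 -
        (a / t) ^ 2 * ‖momentumPoint a x (n + 1) - u‖ ^ 2) +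
      a / t * ⟪e n, momentumPoint a x (n + 1) - u⟫ := by
    rw [eq_sub_of_add_eq' hweights] at hconv hdescent ⊢
    simp only [smul_eq_mul] at hconv
    linarith
  refine (mul_le_mul_of_nonneg_left hunscaled (sq_nonneg t)).trans_eq ?_
  field_simp

theorem lyapunov_succ_add_le (h : InertialDescent F C a s x y e) (ha : 2 < a) (hu : u ∈ C)
    (hmin : IsMinOn F C u) (n : ℕ) :
    lyapunov F a s x u (n + 1) + (a - 2) * (((n : ℝ) + 1 + a) * (F (x (n + 1)) - F u)) ≤
      lyapunov F a s x u n +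
        ((n : ℝ) + 2 + a) * (a * ⟪e n, momentumPoint a x (n + 1) - u⟫) := by
  have hstep := h.sq_mul_gap_succ_le (two_pos.trans ha) hu n
  have hcoeff : ((n : ℝ) + 2) * ((n : ℝ) + 2 + a) + (a - 2) * ((n : ℝ) + 1 + a) ≤
      ((n : ℝ) + 1 + a) ^ 2 := by
    linarith
  have hgap := mul_le_mul_of_nonneg_right hcoeff (h.gap_nonneg hmin n)
  have ht_succ : ((n + 1 : ℕ) : ℝ) + 1 + a = (n : ℝ) + 2 + a := by push_cast; ring
  simp only [lyapunov, ht_succ]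
  linarith

theorem mul_norm_momentumPoint_sub_le (h : InertialDescent F C a s x y e) (hs : 0 < s)
    (hmin : IsMinOn F C u) (n : ℕ) :
    a * ‖momentumPoint a x n - u‖ ≤ √(2 * s) * √(lyapunov F a s x u n) := by
  rw [← Real.sqrt_mul (by positivity)]
  refine Real.le_sqrt_of_sq_le ?_
  have hgap := mul_nonneg (sq_nonneg ((n : ℝ) + 1 + a)) (h.gap_nonneg hmin n)
  calc (a * ‖momentumPoint a x n - u‖) ^ 2
      = 2 * s * (a ^ 2 / (2 * s) * ‖momentumPoint a x n - u‖ ^ 2) := by field_simp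
    _ ≤ 2 * s * lyapunov F a s x u n :=
      mul_le_mul_of_nonneg_left (le_add_of_nonneg_left hgap) (by positivity)

theorem lyapunov_nonneg (h : InertialDescent F C a s x y e) (hs : 0 < s) (hmin : IsMinOn F C u)
    (n : ℕ) : 0 ≤ lyapunov F a s x u n :=
  add_nonneg (mul_nonneg (sq_nonneg _) (h.gap_nonneg hmin n)) (by positivity)

theorem energy_nonneg (h : InertialDescent F C a s x y e) (hs : 0 < s) (hmin : IsMinOn F C u)
    (n : ℕ) : 0 ≤ energy F a s x u n :=
  mul_nonneg (sq_nonneg _) (add_nonneg (h.gap_nonneg hmin n) (by positivity))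

theorem summable_mul_norm_error (h : InertialDescent F C a s x y e) (ha : 0 ≤ a) :
    Summable fun n : ℕ ↦ √(2 * s) * (((n : ℝ) + 2 + a) * ‖e n‖) := by
  refine (Summable.of_nonneg_of_le (fun n ↦ by positivity) (fun n ↦ ?_)
    (h.summable_error.mul_left (1 + a))).mul_left _
  rw [← mul_assoc]
  gcongr
  nlinarith [mul_nonneg ha n.cast_nonneg]

theorem summable_gap_and_exists_tendsto_lyapunov (h : InertialDescent F C a s x y e) (ha : 2 < a)
    (hs : 0 < s) (hu : u ∈ C) (hmin : IsMinOn F C u) :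
    (Summable fun n : ℕ ↦ ((n : ℝ) + 1 + a) * (F (x (n + 1)) - F u)) ∧
      ∃ l, Tendsto (lyapunov F a s x u) atTop (𝓝 l) := by
  have ha0 : 0 < a := two_pos.trans ha
  have hgap (n : ℕ) : 0 ≤ ((n : ℝ) + 1 + a) * (F (x (n + 1)) - F u) :=
    mul_nonneg (by positivity) (h.gap_nonneg hmin n)
  have herror (n : ℕ) :
      ((n : ℝ) + 2 + a) * (a * ⟪e n, momentumPoint a x (n + 1) - u⟫) ≤
        √(2 * s) * (((n : ℝ) + 2 + a) * ‖e n‖) * √(lyapunov F a s x u (n + 1)) :=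
    calc _ ≤ ((n : ℝ) + 2 + a) * (a * (‖e n‖ * ‖momentumPoint a x (n + 1) - u‖)) := by
          gcongr; exact real_inner_le_norm _ _
      _ = ((n : ℝ) + 2 + a) * ‖e n‖ * (a * ‖momentumPoint a x (n + 1) - u‖) := by ring
      _ ≤ ((n : ℝ) + 2 + a) * ‖e n‖ * (√(2 * s) * √(lyapunov F a s x u (n + 1))) :=
          mul_le_mul_of_nonneg_left (h.mul_norm_momentumPoint_sub_le hs hmin _) (by positivity)
      _ = _ := by ring
  have hlyapunov := summable_and_exists_tendsto_of_add_le_add_mul_sqrt (f := 0)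
    (h.lyapunov_nonneg hs hmin) (fun n ↦ mul_nonneg (sub_nonneg.2 ha.le) (hgap n))
    (fun _ ↦ le_rfl) summable_zero (fun n ↦ by positivity) (h.summable_mul_norm_error ha0.le)
    fun n ↦ by
      simpa using (h.lyapunov_succ_add_le ha hu hmin n).trans (add_le_add le_rfl (herror n))
  exact hlyapunov.imp_left (summable_mul_left_iff (sub_pos.2 ha).ne').1

theorem energy_succ_add_le (h : InertialDescent F C a s x y e) (ha : 0 < a) (hs : 0 < s)
    (n : ℕ) :
    energy F a s x u (n + 1) + a / (2 * s) * (((n : ℝ) + 1 + a) * ‖x (n + 1) - x n‖ ^ 2) ≤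
      energy F a s x u n + (2 * ((n : ℝ) + 1 + a) + 1) * (F (x (n + 1)) - F u) +
        ((n : ℝ) + 2 + a) ^ 2 * ⟪e n, x (n + 2) - x (n + 1)⟫ := by
  have hdescent := h.descent n (h.mem n)
  generalize hθ : (n : ℝ) + 2 + a = t
  have ht : 0 < t := by rw [← hθ]; positivity
  rw [h.extrapolation, add_sub_cancel_left, norm_smul, mul_pow, Real.norm_eq_abs, sq_abs, hθ]
    at hdescent
  have hscaled : t ^ 2 * (F (x (n + 2)) - F (x (n + 1))) ≤
      1 / (2 * s) * (((n : ℝ) + 1) ^ 2 * ‖x (n + 1) - x n‖ ^ 2 -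
        t ^ 2 * ‖x (n + 2) - x (n + 1)‖ ^ 2) + t ^ 2 * ⟪e n, x (n + 2) - x (n + 1)⟫ := by
    refine (mul_le_mul_of_nonneg_left hdescent (sq_nonneg t)).trans_eq ?_
    field_simp
  have hcoeff : ((n : ℝ) + 1) ^ 2 + a * ((n : ℝ) + 1 + a) ≤ ((n : ℝ) + 1 + a) ^ 2 := by
    nlinarith [mul_nonneg ha.le n.cast_nonneg]
  have hkinetic := mul_le_mul_of_nonneg_right hcoeff
    (by positivity : 0 ≤ 1 / (2 * s) * ‖x (n + 1) - x n‖ ^ 2)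
  have ht_sq : t ^ 2 = ((n : ℝ) + 1 + a) ^ 2 + (2 * ((n : ℝ) + 1 + a) + 1) := by
    rw [← hθ]; ring
  have ht_succ : ((n + 1 : ℕ) : ℝ) + 1 + a = t := by rw [← hθ]; push_cast; ring
  have hsplit : a / (2 * s) = a * (1 / (2 * s)) := by ring
  simp only [energy, ht_succ, hsplit]
  have hpotential : t ^ 2 * (F (x (n + 1)) - F u) = (((n : ℝ) + 1 + a) ^ 2 +
    (2 * ((n : ℝ) + 1 + a) + 1)) * (F (x (n + 1)) - F u) := by rw [ht_sq]
  linarith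

theorem mul_norm_sub_le (h : InertialDescent F C a s x y e) (ha : 0 ≤ a) (hs : 0 < s)
    (hmin : IsMinOn F C u) (n : ℕ) :
    ((n : ℝ) + 1 + a) * ‖x (n + 1) - x n‖ ≤ √(2 * s) * √(energy F a s x u n) := by
  rw [← Real.sqrt_mul (by positivity)]
  refine Real.le_sqrt_of_sq_le ?_
  calc (((n : ℝ) + 1 + a) * ‖x (n + 1) - x n‖) ^ 2
      = 2 * s * (((n : ℝ) + 1 + a) ^ 2 * (1 / (2 * s) * ‖x (n + 1) - x n‖ ^ 2)) := by field_simp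
    _ ≤ 2 * s * energy F a s x u n := by
      unfold energy
      gcongr
      exact le_add_of_nonneg_left (h.gap_nonneg hmin n)

theorem summable_mul_sq_norm_sub_and_exists_tendsto_energy (h : InertialDescent F C a s x y e)
    (ha : 2 < a) (hs : 0 < s) (hu : u ∈ C) (hmin : IsMinOn F C u) :
    (Summable fun n : ℕ ↦ ((n : ℝ) + 1 + a) * ‖x (n + 1) - x n‖ ^ 2) ∧
      ∃ l, Tendsto (energy F a s x u) atTop (𝓝 l) := by
  have ha0 : 0 < a := two_pos.trans ha
  have hgap (n : ℕ) : 0 ≤ (2 * ((n : ℝ) + 1 + a) + 1) * (F (x (n + 1)) - F u) :=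
    mul_nonneg (by positivity) (h.gap_nonneg hmin n)
  have hgap_summable :
      Summable fun n : ℕ ↦ (2 * ((n : ℝ) + 1 + a) + 1) * (F (x (n + 1)) - F u) := by
    refine Summable.of_nonneg_of_le hgap (fun n ↦ ?_)
      ((h.summable_gap_and_exists_tendsto_lyapunov ha hs hu hmin).1.mul_left 3)
    rw [← mul_assoc]
    exact mul_le_mul_of_nonneg_right (by linarith [n.cast_nonneg (α := ℝ)])
      (h.gap_nonneg hmin n)
  have herror (n : ℕ) : ((n : ℝ) + 2 + a) ^ 2 * ⟪e n, x (n + 2) - x (n + 1)⟫ ≤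
      √(2 * s) * (((n : ℝ) + 2 + a) * ‖e n‖) * √(energy F a s x u (n + 1)) :=
    calc _ ≤ ((n : ℝ) + 2 + a) ^ 2 * (‖e n‖ * ‖x (n + 2) - x (n + 1)‖) := by
          gcongr; exact real_inner_le_norm _ _
      _ = ((n : ℝ) + 2 + a) * ‖e n‖ *
          (((n + 1 : ℕ) + 1 + a) * ‖x (n + 1 + 1) - x (n + 1)‖) := by push_cast; ring
      _ ≤ ((n : ℝ) + 2 + a) * ‖e n‖ * (√(2 * s) * √(energy F a s x u (n + 1))) :=
          mul_le_mul_of_nonneg_left (h.mul_norm_sub_le ha0.le hs hmin _) (by positivity)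
      _ = _ := by ring
  have henergy := summable_and_exists_tendsto_of_add_le_add_mul_sqrt (h.energy_nonneg hs hmin)
    (fun n ↦ by positivity) hgap hgap_summable (fun n ↦ by positivity)
    (h.summable_mul_norm_error ha0.le)
    fun n ↦ (h.energy_succ_add_le ha0 hs n).trans (add_le_add le_rfl (herror n))
  exact henergy.imp_left (summable_mul_left_iff (by positivity)).1

theorem tendsto_energy (h : InertialDescent F C a s x y e) (ha : 2 < a) (hs : 0 < s)
    (hu : u ∈ C) (hmin : IsMinOn F C u) : Tendsto (energy F a s x u) atTop (𝓝 0) := by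
  have : 0 < a := two_pos.trans ha
  have hgap := (h.summable_gap_and_exists_tendsto_lyapunov ha hs hu hmin).1
  obtain ⟨hvelocity, l, hl⟩ := h.summable_mul_sq_norm_sub_and_exists_tendsto_energy ha hs hu hmin
  have hharmonic : ¬Summable fun n : ℕ ↦ 1 / ((n : ℝ) + 1 + a) := fun hsum ↦ by
    refine lt_irrefl (1 : ℝ) ((Real.summable_one_div_nat_add_rpow (1 + a) 1).1 ?_)
    refine hsum.congr fun n ↦ ?_
    rw [Real.rpow_one, abs_of_nonneg (by positivity), add_assoc]
  have hsummable : Summable fun n : ℕ ↦ energy F a s x u n * (1 / ((n : ℝ) + 1 + a)) := by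
    refine (hgap.add (hvelocity.mul_left (1 / (2 * s)))).congr fun n ↦ ?_
    unfold energy
    field_simp
  rwa [eq_zero_of_tendsto_of_summable_mul hl hharmonic hsummable] at hl

theorem tendsto_sq_mul_gap (h : InertialDescent F C a s x y e) (ha : 2 < a) (hs : 0 < s)
    (hu : u ∈ C) (hmin : IsMinOn F C u) :
    Tendsto (fun n : ℕ ↦ ((n : ℝ) + 1 + a) ^ 2 * (F (x (n + 1)) - F u)) atTop (𝓝 0) := by
  refine squeeze_zero (fun n ↦ mul_nonneg (sq_nonneg _) (h.gap_nonneg hmin n)) (fun n ↦ ?_)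
    (h.tendsto_energy ha hs hu hmin)
  exact mul_le_mul_of_nonneg_left (le_add_of_nonneg_right (by positivity)) (sq_nonneg _)

theorem tendsto_value (h : InertialDescent F C a s x y e) (ha : 2 < a) (hs : 0 < s)
    (hu : u ∈ C) (hmin : IsMinOn F C u) : Tendsto (fun n ↦ F (x (n + 1))) atTop (𝓝 (F u)) := by
  refine tendsto_sub_nhds_zero_iff.1 <| squeeze_zero (h.gap_nonneg hmin) (fun n ↦ ?_)
    (h.tendsto_sq_mul_gap ha hs hu hmin)
  exact le_mul_of_one_le_left (h.gap_nonneg hmin n)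
    (one_le_pow₀ (by linarith [n.cast_nonneg (α := ℝ)]))

theorem tendsto_mul_norm_sub (h : InertialDescent F C a s x y e) (ha : 2 < a) (hs : 0 < s)
    (hu : u ∈ C) (hmin : IsMinOn F C u) :
    Tendsto (fun n : ℕ ↦ ((n : ℝ) + 1 + a) * ‖x (n + 1) - x n‖) atTop (𝓝 0) := by
  have ha0 : 0 < a := two_pos.trans ha
  refine squeeze_zero (fun n ↦ by positivity) (h.mul_norm_sub_le ha0.le hs hmin) ?_
  simpa using (h.tendsto_energy ha hs hu hmin).sqrt.const_mul √(2 * s)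

theorem exists_tendsto_norm_sub (h : InertialDescent F C a s x y e) (ha : 2 < a) (hs : 0 < s)
    (hu : u ∈ C) (hmin : IsMinOn F C u) :
    ∃ r, Tendsto (fun n ↦ ‖x (n + 1) - u‖) atTop (𝓝 r) := by
  have ha0 : 0 < a := two_pos.trans ha
  obtain ⟨-, l, hl⟩ := h.summable_gap_and_exists_tendsto_lyapunov ha hs hu hmin
  have hmomentum : Tendsto (fun n ↦ ‖momentumPoint a x n - u‖) atTop
      (𝓝 √(2 * s / a ^ 2 * (l - 0))) := by
    refine ((hl.sub (h.tendsto_sq_mul_gap ha hs hu hmin)).const_mul (2 * s / a ^ 2)).sqrt.congr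
      fun n ↦ ?_
    have hsq : 2 * s / a ^ 2 * (lyapunov F a s x u n -
        ((n : ℝ) + 1 + a) ^ 2 * (F (x (n + 1)) - F u)) = ‖momentumPoint a x n - u‖ ^ 2 := by
      rw [lyapunov, add_sub_cancel_left]
      field_simp
    rw [hsq, Real.sqrt_sq (norm_nonneg _)]
  have hdiff : Tendsto (fun n ↦ ‖x (n + 1) - u‖ - ‖momentumPoint a x n - u‖) atTop (𝓝 0) := by
    refine squeeze_zero_norm (fun n ↦ ?_)
      (by simpa using (h.tendsto_mul_norm_sub ha hs hu hmin).div_const a)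
    refine (abs_norm_sub_norm_le _ _).trans ?_
    rw [sub_sub_sub_cancel_right, momentumPoint, norm_sub_rev, add_sub_cancel_left, norm_smul,
      Real.norm_of_nonneg (by positivity), div_mul_eq_mul_div]
    gcongr ?_ * _ / _
    exact le_add_of_nonneg_right ha0.le
  exact ⟨_, (hmomentum.add hdiff).congr fun n ↦ add_sub_cancel _ _⟩

end InertialDescent

end InertialDescent

section ExtendedReal

/-- Convexity of a function with values in `EReal`, which is not a module over `ℝ`, so that
`ConvexOn` does not apply. -/
def ERealConvex {E : Type*} [AddCommGroup E] [Module ℝ E] (Ψ : E → EReal) : Prop :=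
  ∀ u v : E, ∀ a b : ℝ, 0 ≤ a → 0 ≤ b → a + b = 1 →
    Ψ (a • u + b • v) ≤ (a : EReal) * Ψ u + (b : EReal) * Ψ v

/-- The effective domain of a function with values in `ℝ ∪ {+∞}`. -/
def effectiveDomain {X : Type*} (Ψ : X → EReal) : Set X := {u | Ψ u ≠ ⊤}

theorem add_coe_eq_coe_toReal_add {z : EReal} (hbot : z ≠ ⊥) (htop : z ≠ ⊤) (r : ℝ) :
    z + (r : EReal) = ((z.toReal + r : ℝ) : EReal) := by
  rw [EReal.coe_add, EReal.coe_toReal htop hbot]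

theorem mem_effectiveDomain_and_isMinOn_of_forall_le {X : Type*} {Ψ : X → EReal} {ρ : X → ℝ}
    {p : X} (hbot : ∀ u, Ψ u ≠ ⊥) (hproper : (effectiveDomain Ψ).Nonempty)
    (hp : ∀ u, Ψ p + (ρ p : EReal) ≤ Ψ u + (ρ u : EReal)) :
    p ∈ effectiveDomain Ψ ∧ IsMinOn (fun u ↦ (Ψ u).toReal + ρ u) (effectiveDomain Ψ) p := by
  have hmem : p ∈ effectiveDomain Ψ := fun htop ↦ by
    obtain ⟨u, hu⟩ := hproper
    have hle := hp u
    rw [htop, EReal.top_add_coe, add_coe_eq_coe_toReal_add (hbot u) hu, top_le_iff] at hle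
    exact EReal.coe_ne_top _ hle
  refine ⟨hmem, isMinOn_iff.2 fun u hu ↦ ?_⟩
  have hle := hp u
  rwa [add_coe_eq_coe_toReal_add (hbot p) hmem, add_coe_eq_coe_toReal_add (hbot u) hu,
    EReal.coe_le_coe_iff] at hle

theorem lowerSemicontinuous_add_coe {X : Type*} [TopologicalSpace X] {Ψ : X → EReal}
    {Φ : X → ℝ} (hΨ : LowerSemicontinuous Ψ) (hΦ : Continuous Φ) :
    LowerSemicontinuous fun u ↦ Ψ u + (Φ u : EReal) :=
  hΨ.add' (continuous_coe_real_ereal.comp hΦ).lowerSemicontinuous fun _ ↦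
    EReal.continuousAt_add (Or.inr (EReal.coe_ne_bot _)) (Or.inr (EReal.coe_ne_top _))

namespace ERealConvex

variable {E : Type*} [AddCommGroup E] [Module ℝ E] {Ψ : E → EReal}

theorem quasiconvexOn (hΨ : ERealConvex Ψ) : QuasiconvexOn ℝ univ Ψ := by
  rintro r u ⟨-, hu⟩ v ⟨-, hv⟩ a b ha hb hab
  have ha' : (0 : EReal) ≤ a := EReal.coe_nonneg.2 ha
  have hb' : (0 : EReal) ≤ b := EReal.coe_nonneg.2 hb
  refine ⟨mem_univ _, (hΨ u v a b ha hb hab).trans ?_⟩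
  calc (a : EReal) * Ψ u + (b : EReal) * Ψ v ≤ a * r + b * r := by gcongr
    _ = r := by
      rw [← EReal.right_distrib_of_nonneg ha' hb', ← EReal.coe_add, hab, EReal.coe_one, one_mul]

theorem add_coe {Φ : E → ℝ} (hΨ : ERealConvex Ψ) (hΦ : ConvexOn ℝ univ Φ) :
    ERealConvex fun u ↦ Ψ u + (Φ u : EReal) := by
  intro u v a b ha hb hab
  have hΦ_le : (Φ (a • u + b • v) : EReal) ≤ (a : EReal) * Φ u + (b : EReal) * Φ v := by
    exact_mod_cast hΦ.2 (mem_univ u) (mem_univ v) ha hb hab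
  have hdistrib {c : ℝ} (hc : 0 ≤ c) (w : E) :
      (c : EReal) * (Ψ w + (Φ w : EReal)) = c * Ψ w + c * Φ w :=
    EReal.left_distrib_of_nonneg_of_ne_top (EReal.coe_nonneg.2 hc) (EReal.coe_ne_top c) _ _
  rw [hdistrib ha, hdistrib hb, add_add_add_comm]
  exact add_le_add (hΨ u v a b ha hb hab) hΦ_le

theorem convexOn_toReal (hΨ : ERealConvex Ψ) (hbot : ∀ u, Ψ u ≠ ⊥) :
    ConvexOn ℝ (effectiveDomain Ψ) fun u ↦ (Ψ u).toReal := by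
  have hle {u v : E} (hu : u ∈ effectiveDomain Ψ) (hv : v ∈ effectiveDomain Ψ) {a b : ℝ}
      (ha : 0 ≤ a) (hb : 0 ≤ b) (hab : a + b = 1) :
      Ψ (a • u + b • v) ≤ ((a * (Ψ u).toReal + b * (Ψ v).toReal : ℝ) : EReal) := by
    rw [EReal.coe_add, EReal.coe_mul, EReal.coe_mul, EReal.coe_toReal hu (hbot u),
      EReal.coe_toReal hv (hbot v)]
    exact hΨ u v a b ha hb hab
  refine ⟨fun u hu v hv a b ha hb hab ↦ ?_, fun u hu v hv a b ha hb hab ↦ ?_⟩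
  · exact ne_top_of_le_ne_top (EReal.coe_ne_top _) (hle hu hv ha hb hab)
  · exact EReal.toReal_le_toReal (hle hu hv ha hb hab) (hbot _) (EReal.coe_ne_top _)

end ERealConvex

end ExtendedReal

section InexactForwardBackward

variable {H : Type*} [NormedAddCommGroup H]

/-- `p` is the proximal point of `v` for `Ψ` with step size `s`. -/
def IsProx (Ψ : H → EReal) (s : ℝ) (v p : H) : Prop :=
  ∀ u, Ψ p + ((1 / (2 * s) * ‖p - v‖ ^ 2 : ℝ) : EReal) ≤
    Ψ u + ((1 / (2 * s) * ‖u - v‖ ^ 2 : ℝ) : EReal)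

theorem IsProx.mem_and_isMinOn {Ψ : H → EReal} {s : ℝ} {v p : H} (h : IsProx Ψ s v p)
    (hbot : ∀ u, Ψ u ≠ ⊥) (hproper : (effectiveDomain Ψ).Nonempty) : p ∈ effectiveDomain Ψ ∧
      IsMinOn (fun u ↦ (Ψ u).toReal + 1 / (2 * s) * ‖u - v‖ ^ 2) (effectiveDomain Ψ) p :=
  mem_effectiveDomain_and_isMinOn_of_forall_le hbot hproper h

variable [InnerProductSpace ℝ H]

/-- The sequences `x`, `y` are generated by the accelerated forward–backward algorithm for `Ψ` and
the gradient `Φ'`, with errors `g`. -/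
structure IsAcceleratedForwardBackward (Ψ : H → EReal) (Φ' : H → H) (α s : ℝ) (g x y : ℕ → H) :
    Prop where
  extrapolation (k : ℕ) (hk : 1 ≤ k) :
    y k = x k + (((k : ℝ) - 1) / ((k : ℝ) + α - 1)) • (x k - x (k - 1))
  isProx (k : ℕ) (hk : 1 ≤ k) : IsProx Ψ s (y k - s • (Φ' (y k) - g k)) (x (k + 1))

variable {Ψ : H → EReal} {Φ : H → ℝ} {Φ' : H → H} {L : ℝ≥0} {s α : ℝ} {g x y : ℕ → H}

theorem IsAcceleratedForwardBackward.inertialDescent [CompleteSpace H]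
    (h : IsAcceleratedForwardBackward Ψ Φ' α s g x y) (hbot : ∀ u, Ψ u ≠ ⊥)
    (hproper : (effectiveDomain Ψ).Nonempty) (hΨ : ERealConvex Ψ) (hΦ : ConvexOn ℝ univ Φ)
    (hΦ_grad : ∀ u, HasGradientAt Φ (Φ' u) u) (hΦ' : LipschitzWith L Φ') (hs : 0 < s)
    (hsL : s * L ≤ 1) (hg : Summable fun k : ℕ ↦ (k : ℝ) * ‖g k‖) :
    InertialDescent (fun u ↦ (Ψ u).toReal + Φ u) (effectiveDomain Ψ) (α - 1) s
      (fun n ↦ x (n + 1)) (fun n ↦ y (n + 2)) (fun n ↦ g (n + 2)) where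
  convexOn := (hΨ.convexOn_toReal hbot).add
    (hΦ.subset (subset_univ _) (hΨ.convexOn_toReal hbot).1)
  mem n := ((h.isProx (n + 1) n.succ_pos).mem_and_isMinOn hbot hproper).1
  extrapolation n := by
    rw [h.extrapolation (n + 2) (by lia)]
    push_cast
    congr 3 <;> ring
  descent n u hu := by
    obtain ⟨hmem, hmin⟩ := (h.isProx (n + 2) (by lia)).mem_and_isMinOn hbot hproper
    exact forwardBackward_step_le (hΨ.convexOn_toReal hbot) hΦ hΦ_grad hΦ' hs hsL hmin hmem hu
  summable_error := by
    simpa using (summable_nat_add_iff (f := fun k : ℕ ↦ (k : ℝ) * ‖g k‖) 2).2 hg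

namespace InertialDescent

variable {a : ℝ} {e : ℕ → H} {u : H}

theorem tendsto_sq_mul_ereal_gap (h : InertialDescent (fun u ↦ (Ψ u).toReal + Φ u)
      (effectiveDomain Ψ) a s (fun n ↦ x (n + 1)) y e)
    (ha : 2 < a) (hs : 0 < s) (hbot : ∀ u, Ψ u ≠ ⊥) (hu : u ∈ effectiveDomain Ψ)
    (hmin : IsMinOn (fun u ↦ (Ψ u).toReal + Φ u) (effectiveDomain Ψ) u) :
    Tendsto (fun k : ℕ ↦ (((k : ℝ) ^ 2 : ℝ) : EReal) *
      ((Ψ (x k) + (Φ (x k) : EReal)) - (Ψ u + (Φ u : EReal)))) atTop (𝓝 0) := by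
  rw [← tendsto_add_atTop_iff_nat 2]
  have hreal : Tendsto (fun n : ℕ ↦ ((n + 2 : ℕ) : ℝ) ^ 2 *
      ((Ψ (x (n + 2))).toReal + Φ (x (n + 2)) - ((Ψ u).toReal + Φ u))) atTop (𝓝 0) := by
    refine squeeze_zero (fun n ↦ mul_nonneg (sq_nonneg _) (h.gap_nonneg hmin n)) (fun n ↦ ?_)
      (h.tendsto_sq_mul_gap ha hs hu hmin)
    refine mul_le_mul_of_nonneg_right (pow_le_pow_left₀ (Nat.cast_nonneg _) ?_ 2)
      (h.gap_nonneg hmin n)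
    push_cast
    linarith
  refine (EReal.tendsto_coe.2 hreal).congr fun n ↦ ?_
  rw [add_coe_eq_coe_toReal_add (hbot _) (h.mem n), add_coe_eq_coe_toReal_add (hbot u) hu,
    ← EReal.coe_sub, ← EReal.coe_mul]

theorem tendsto_natCast_mul_norm_sub {F : H → ℝ} {C : Set H}
    (h : InertialDescent F C a s (fun n ↦ x (n + 1)) y e) (ha : 2 < a) (hs : 0 < s) (hu : u ∈ C)
    (hmin : IsMinOn F C u) :
    Tendsto (fun k : ℕ ↦ (k : ℝ) * ‖x (k + 1) - x k‖) atTop (𝓝 0) := by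
  rw [← tendsto_add_atTop_iff_nat 1]
  refine squeeze_zero (fun n ↦ by positivity) (fun n ↦ ?_) (h.tendsto_mul_norm_sub ha hs hu hmin)
  gcongr
  push_cast
  linarith

theorem exists_minimizer_tendsto_inner [CompleteSpace H]
    (h : InertialDescent (fun u ↦ (Ψ u).toReal + Φ u) (effectiveDomain Ψ) a s
      (fun n ↦ x (n + 1)) y e)
    (ha : 2 < a) (hs : 0 < s) (hbot : ∀ u, Ψ u ≠ ⊥) (hproper : (effectiveDomain Ψ).Nonempty)
    (hlsc : LowerSemicontinuous Ψ) (hΨ : ERealConvex Ψ) (hΦ : ConvexOn ℝ univ Φ)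
    (hΦ_cont : Continuous Φ) (hu : ∀ v, Ψ u + (Φ u : EReal) ≤ Ψ v + (Φ v : EReal)) :
    ∃ p, (∀ v, Ψ p + (Φ p : EReal) ≤ Ψ v + (Φ v : EReal)) ∧
      ∀ v, Tendsto (fun k ↦ ⟪x k, v⟫) atTop (𝓝 ⟪p, v⟫) := by
  have hvalue : Tendsto (fun n ↦ Ψ (x (n + 2)) + (Φ (x (n + 2)) : EReal)) atTop
      (𝓝 (Ψ u + (Φ u : EReal))) := by
    obtain ⟨hmem, hmin⟩ := mem_effectiveDomain_and_isMinOn_of_forall_le hbot hproper hu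
    rw [add_coe_eq_coe_toReal_add (hbot u) hmem]
    refine (EReal.tendsto_coe.2 (h.tendsto_value ha hs hmem hmin)).congr fun n ↦ ?_
    exact (add_coe_eq_coe_toReal_add (hbot _) (h.mem n) _).symm
  obtain ⟨p, hp, hweak⟩ := exists_tendsto_toWeakSpace_of_forall_tendsto_norm_sub
    (x := fun n ↦ x (n + 2)) (l := atTop)
    (S := {p | ∀ v, Ψ p + (Φ p : EReal) ≤ Ψ v + (Φ v : EReal)}) ⟨u, hu⟩
    (fun w hw ↦ by
      obtain ⟨hmem, hmin⟩ := mem_effectiveDomain_and_isMinOn_of_forall_le hbot hproper hw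
      exact h.exists_tendsto_norm_sub ha hs hmem hmin)
    fun p hp v ↦ (le_of_mapClusterPt_toWeakSpace (lowerSemicontinuous_add_coe hlsc hΦ_cont)
      (hΨ.add_coe hΦ).quasiconvexOn hp hvalue).trans (hu v)
  exact ⟨p, hp, fun v ↦
    (tendsto_add_atTop_iff_nat 2).1 (tendsto_inner_of_tendsto_toWeakSpace hweak v)⟩

end InertialDescent

end InexactForwardBackward

theorem inexact_fista_convergence_general
    {H : Type*} [NormedAddCommGroup H] [InnerProductSpace ℝ H] [CompleteSpace H]
    (Ψ : H → EReal) (Φ : H → ℝ) (Φ' : H → H) (L : ℝ≥0) (s α : ℝ)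
    (hΨ_ne_bot : ∀ u, Ψ u ≠ ⊥) (hΨ_proper : (effectiveDomain Ψ).Nonempty)
    (hΨ_lsc : LowerSemicontinuous Ψ) (hΨ_convex : ERealConvex Ψ)
    (hΦ_convex : ConvexOn ℝ univ Φ) (hΦ_diff : ∀ u, HasGradientAt Φ (Φ' u) u)
    (hΦ_lip : LipschitzWith L Φ') (g : ℕ → H) (hα : 3 < α) (hs : 0 < s) (hsL : s * L ≤ 1)
    (x y : ℕ → H) (hxy : IsAcceleratedForwardBackward Ψ Φ' α s g x y) (xstar : H)
    (hxstar : ∀ u, Ψ xstar + (Φ xstar : EReal) ≤ Ψ u + (Φ u : EReal))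
    (hg : Summable fun k : ℕ ↦ (k : ℝ) * ‖g k‖) :
    Tendsto (fun k : ℕ ↦ (((k : ℝ) ^ 2 : ℝ) : EReal) *
        ((Ψ (x k) + (Φ (x k) : EReal)) - (Ψ xstar + (Φ xstar : EReal)))) atTop (𝓝 0) ∧
      Tendsto (fun k : ℕ ↦ (k : ℝ) * ‖x (k + 1) - x k‖) atTop (𝓝 0) ∧
      ∃ p : H, (∀ u, Ψ p + (Φ p : EReal) ≤ Ψ u + (Φ u : EReal)) ∧
        ∀ v : H, Tendsto (fun k : ℕ ↦ ⟪x k, v⟫) atTop (𝓝 ⟪p, v⟫) := by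
  obtain ⟨hmem, hmin⟩ :=
    mem_effectiveDomain_and_isMinOn_of_forall_le hΨ_ne_bot hΨ_proper hxstar
  have hΦ_cont : Continuous Φ := continuous_iff_continuousAt.2 fun u ↦ (hΦ_diff u).continuousAt
  have h := hxy.inertialDescent hΨ_ne_bot hΨ_proper hΨ_convex hΦ_convex hΦ_diff hΦ_lip hs hsL hg
  have ha : 2 < α - 1 := by linarith
  exact ⟨h.tendsto_sq_mul_ereal_gap ha hs hΨ_ne_bot hmem hmin,
    h.tendsto_natCast_mul_norm_sub ha hs hmem hmin,
    h.exists_minimizer_tendsto_inner ha hs hΨ_ne_bot hΨ_proper hΨ_lsc hΨ_convex hΦ_convex hΦ_cont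
      hxstar⟩

/-- Theorem 3: stability of the `o(k⁻²)` rates and weak convergence under summable errors. -/
theorem inexact_fista_convergence
    {H : Type*} [NormedAddCommGroup H] [InnerProductSpace ℝ H] [CompleteSpace H]
    (Ψ : H → EReal) (Φ : H → ℝ) (Φ' : H → H) (L s α : ℝ)
    (hΨ_ne_bot : ∀ u, Ψ u ≠ ⊥) (hΨ_proper : ∃ u, Ψ u ≠ ⊤)
    (hΨ_lsc : LowerSemicontinuous Ψ)
    (hΨ_convex : ∀ u v : H, ∀ a b : ℝ, 0 ≤ a → 0 ≤ b → a + b = 1 →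
      Ψ (a • u + b • v) ≤ (a : EReal) * Ψ u + (b : EReal) * Ψ v)
    (hΦ_convex : ConvexOn ℝ Set.univ Φ)
    (hΦ_diff : ∀ u, HasGradientAt Φ (Φ' u) u)
    (hΦ_lip : LipschitzWith (Real.toNNReal L) Φ')
    (g : ℕ → H)
    (hα : 3 < α) (hs : 0 < s) (hsL : s < 1 / L)
    (x y : ℕ → H)
    (hy : ∀ k : ℕ, 1 ≤ k →
      y k = x k + (((k : ℝ) - 1) / ((k : ℝ) + α - 1)) • (x k - x (k - 1)))
    (hx : ∀ k : ℕ, 1 ≤ k → ∀ u : H,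
      Ψ (x (k + 1)) + ((1 / (2 * s) * ‖x (k + 1) - (y k - s • (Φ' (y k) - g k))‖ ^ 2 : ℝ) : EReal)
        ≤ Ψ u + ((1 / (2 * s) * ‖u - (y k - s • (Φ' (y k) - g k))‖ ^ 2 : ℝ) : EReal))
    (xstar : H)
    (hxstar : ∀ u, Ψ xstar + (Φ xstar : EReal) ≤ Ψ u + (Φ u : EReal))
    (hg : Summable fun k : ℕ => (k : ℝ) * ‖g k‖) :
    Tendsto (fun k : ℕ => (((k : ℝ) ^ 2 : ℝ) : EReal) * ((Ψ (x k) + (Φ (x k) : EReal)) - (Ψ xstar + (Φ xstar : EReal)))) atTop (nhds 0) ∧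
      Tendsto (fun k : ℕ => (k : ℝ) * ‖x (k + 1) - x k‖) atTop (nhds 0) ∧
      ∃ p : H, (∀ u, Ψ p + (Φ p : EReal) ≤ Ψ u + (Φ u : EReal)) ∧
        ∀ v : H, Tendsto (fun k : ℕ => ⟪x k, v⟫) atTop (nhds ⟪p, v⟫) := by
  have hL : 0 < L := one_div_pos.1 (hs.trans hsL)
  have hsL' : s * L.toNNReal ≤ 1 := by
    rw [Real.coe_toNNReal L hL.le]
    exact ((lt_div_iff₀ hL).1 hsL).le
  exact inexact_fista_convergence_general Ψ Φ Φ' L.toNNReal s α hΨ_ne_bot hΨ_proper hΨ_lsc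
    hΨ_convex hΦ_convex hΦ_diff hΦ_lip g hα hs hsL' x y ⟨hy, hx⟩ xstar hxstar hg
end
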